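/- arXiv:2305.17045 — 5 statements merged into one kernel-verified Lean document; each statement's English description precedes it below -/
import Mathlib

section
/- There exist universal constants C < ∞ and K₀ < ∞ such that the following holds for every x̄ ∈ S² and every r̄ ∈ (0,π/2]. Let M : S² → S² be the Möbius transformation given by the dilation centred at x̄ which maps B_{r̄}(x̄) onto a hemisphere, with conformal factors ρ_M = (1/√2)|dM| and ρ_{M⁻¹} = (1/√2)|dM⁻¹|. Then: (i) C⁻¹·r̄⁻¹/(1+(r̄⁻¹·dist_{S²}(x,x̄))²) ≤ ρ_M(x) ≤ C·r̄⁻¹/(1+(r̄⁻¹·dist_{S²}(x,x̄))²) for all x ∈ S², and C⁻¹·r̄⁻¹/(1+(r̄⁻¹·dist_{S²}(y,−x̄))²) ≤ ρ_{M⁻¹}(y) ≤ C·r̄⁻¹/(1+(r̄⁻¹·dist_{S²}(y,−x̄))²) for all y ∈ S²; (ii) sup{ρ_M(x₁)/ρ_M(x₂) : x₁,x₂ ∈ B_{2r̄}(x)} ≤ K₀ for every x ∈ S²; and (iii) C⁻¹·r̄/dist_{S²}(x,x̄) ≤ dist_{S²}(M(x), −x̄) ≤ C·r̄/dist_{S²}(x,x̄)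 for every x ∈ S² with r̄ ≤ dist_{S²}(x,x̄) ≤ π/2. -/
open MeasureTheory Metric Real Set Filter
open scoped RealInnerProductSpace

noncomputable section

abbrev E3 : Type := EuclideanSpace ℝ (Fin 3)

/-- The unit sphere `S² ⊂ ℝ³`. -/
def S2 : Set E3 := Metric.sphere (0 : E3) 1

/-- Surface measure on `S²`: 2-dimensional Hausdorff measure restricted to the sphere. -/
def sphVol : Measure E3 := (μH[2] : Measure E3).restrict S2

/-- The 0-homogeneous extension of a map defined on the sphere. -/
def homExt (u : E3 → E3) : E3 → E3 := fun y => u (‖y‖⁻¹ • y)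

def e3 (i : Fin 3) : E3 := EuclideanSpace.single i (1 : ℝ)

/-- Energy density `|∇u|²` of `u|_{S²}` at `x ∈ S²` (squared Hilbert-Schmidt norm of the
differential, computed via the 0-homogeneous extension). -/
def enDensity (u : E3 → E3) (x : E3) : ℝ :=
  ∑ i, ‖fderiv ℝ (homExt u) x (e3 i)‖ ^ 2

/-- Dirichlet energy `E(u,Ω) = (1/2)∫_Ω |∇u|²`. -/
def energyOn (u : E3 → E3) (Ω : Set E3) : ℝ :=
  (1 / 2) * ∫ x in Ω, enDensity u x ∂sphVol

def energy (u : E3 → E3) : ℝ := energyOn u S2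

def det3 (a b c : E3) : ℝ :=
  a 0 * (b 1 * c 2 - b 2 * c 1) - a 1 * (b 0 * c 2 - b 2 * c 0)
    + a 2 * (b 0 * c 1 - b 1 * c 0)

/-- The signed Jacobian of a sphere map. -/
def jacobian (u : E3 → E3) (x : E3) : ℝ :=
  (1 / 2) * ∑ i, ∑ j, det3 x (e3 i) (e3 j) *
      det3 (u x) (fderiv ℝ (homExt u) x (e3 i)) (fderiv ℝ (homExt u) x (e3 j))

/-- The (Brouwer) degree, `deg u = (1/4π) ∫ Jac(u)`. -/
def sphDeg (u : E3 → E3) : ℝ := (4 * π)⁻¹ * ∫ x, jacobian u x ∂sphVol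

/-- The energy defect `δ_u = E(u) - 4π|deg u|`. -/
def defect (u : E3 → E3) : ℝ := energy u - 4 * π * |sphDeg u|

def IsSphereMap (u : E3 → E3) : Prop :=
  ContDiff ℝ (⊤ : ℕ∞) u ∧ ∀ x ∈ S2, u x ∈ S2

/-- Laplace-Beltrami operator of the round sphere applied to `u`. -/
def sphLap (u : E3 → E3) (x : E3) : E3 :=
  ∑ i, fderiv ℝ (fun y => fderiv ℝ (homExt u) y (e3 i)) x (e3 i)

/-- Tension field `τ(u) = Δu + |∇u|² u`. -/
def tension (u : E3 → E3) (x : E3) : E3 :=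
  sphLap u x + enDensity u x • u x

/-- Harmonic (= rational, up to orientation) maps of the round sphere. -/
def IsHarmonicSphereMap (u : E3 → E3) : Prop :=
  IsSphereMap u ∧ ∀ x ∈ S2, tension u x = 0

/-- Geodesic distance on `S²`. -/
def gdist (x y : E3) : ℝ := Real.arccos ⟪x, y⟫

/-- Geodesic ball in `S²`. -/
def gBall (x : E3) (r : ℝ) : Set E3 := {y ∈ S2 | gdist x y < r}

/-- Oscillation of `u` over `U`. -/
def oscOn (u : E3 → E3) (U : Set E3) : ℝ := ⨆ x ∈ U, ⨆ y ∈ U, ‖u x - u y‖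

/-- The Möbius dilation of the sphere with centre `p` and dilation factor `μ`. -/
def mobius (p : E3) (μ : ℝ) (y : E3) : E3 :=
  ((1 + ⟪y, p⟫) + μ ^ 2 * (1 - ⟪y, p⟫))⁻¹ •
    (((1 + ⟪y, p⟫) - μ ^ 2 * (1 - ⟪y, p⟫)) • p + (2 * μ) • (y - ⟪y, p⟫ • p))

/-- The Möbius dilation `M_{p,r}` centred at `p` scaling `B_r(p)` to a hemisphere. -/
def mobiusDil (p : E3) (r : ℝ) : E3 → E3 := mobius p (Real.tan (r / 2))⁻¹

/-- `ρ_{p,r}² = (1/2)|∇M_{p,r}|²`, the conformal factor squared of `M_{p,r}`. -/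
def confSq (p : E3) (r : ℝ) (x : E3) : ℝ := (1 / 2) * enDensity (mobiusDil p r) x

/-- Möbius transformations (conformal diffeomorphisms) of the round sphere:
compositions of an isometry with a Möbius dilation. -/
def IsMobiusTransform (M : E3 → E3) : Prop :=
  ∃ (R : E3 ≃ₗᵢ[ℝ] E3) (p : E3) (μ : ℝ),
    p ∈ S2 ∧ 0 < μ ∧ ∀ x ∈ S2, M x = R (mobius p μ x)

/-- A set obtained from a geodesic ball by removing a finite collection of smaller balls. -/
def IsBallMinusBalls (Ω : Set E3) : Prop :=
  ∃ (c : E3) (R : ℝ) (m : ℕ) (cs : Fin m → E3) (rs : Fin m → ℝ),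
    c ∈ S2 ∧ 0 < R ∧ (∀ j, cs j ∈ S2 ∧ rs j < R) ∧
    Ω = gBall c R \ ⋃ j, gBall (cs j) (rs j)

/-!
In terms of the distance `θ` to the centre, the dilation with factor `μ` acts by
`tan (θ / 2) ↦ μ * tan (θ / 2)`. Writing its 0-homogeneous extension as `2 • D⁻¹ • N - p` with
`‖N‖²` divisible by `D`, the cross terms in the derivative cancel and the conformal factor comes out
as `μ / (cos² (θ / 2) + μ² sin² (θ / 2))`. For `μ⁻¹ = tan (r / 2)`, comparable to `r / 2`, this is
comparable to `r / (r² + θ²)`. The inverse dilation is the dilation centred at the antipode with the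
same factor, so its estimates need no separate argument.
-/

section Quotient

variable {E F : Type*} [NormedAddCommGroup F] [NormedSpace ℝ F]
  [NormedAddCommGroup E] [InnerProductSpace ℝ E]

lemma norm_sq_fderiv_inv_smul {N : F → E} {f D : F → ℝ} {N' : F →L[ℝ] E} {f' D' : F →L[ℝ] ℝ}
    {x : F} (hN : HasFDerivAt N N' x) (hf : HasFDerivAt f f' x) (hD : HasFDerivAt D D' x)
    (hDx : D x ≠ 0) (hnorm : ∀ y, ‖N y‖ ^ 2 = f y * D y) (v : F) :
    ‖fderiv ℝ (fun y => (D y)⁻¹ • N y) x v‖ ^ 2 = (‖N' v‖ ^ 2 - f' v * D' v) / D x ^ 2 := by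
  have hquot : fderiv ℝ (fun y => (D y)⁻¹ • N y) x v =
      (D x)⁻¹ • N' v - (D' v / D x ^ 2) • N x := by
    have hinv : HasFDerivAt (fun y => (D y)⁻¹) (-(D x ^ 2)⁻¹ • D') x :=
      (hasDerivAt_inv hDx).comp_hasFDerivAt x hD
    rw [(hinv.fun_smul hN).fderiv]
    simp only [add_apply, smul_apply,
      ContinuousLinearMap.smulRight_apply, smul_eq_mul]
    module
  have hpolar : 2 * ⟪N x, N' v⟫ = f x * D' v + D x * f' v := by
    have hprod : HasFDerivAt (fun y => ‖N y‖ ^ 2) (f x • D' + D x • f') x := by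
      simpa only [hnorm] using hf.fun_mul hD
    simpa using DFunLike.congr_fun (hN.norm_sq.unique hprod) v
  have hinner : ⟪N' v, N x⟫ = (f x * D' v + D x * f' v) / 2 := by
    rw [real_inner_comm, ← hpolar]
    ring
  rw [hquot, norm_sub_sq_real, norm_smul, norm_smul, mul_pow, mul_pow, hnorm x,
    real_inner_smul_left, real_inner_smul_right, hinner, norm_eq_abs, norm_eq_abs, sq_abs, sq_abs]
  field_simp
  ring

end Quotient

section Homogeneous

variable {E : Type*} [NormedAddCommGroup E] [InnerProductSpace ℝ E]

/-- The 1-homogeneous numerator of the dilation with centre `p` and factor `μ`: on the unit sphere,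
the dilation is `2 • (dilationDen p μ y)⁻¹ • dilationNum p μ y - p`. Both are 1-homogeneous, so the
quotient is the 0-homogeneous extension. -/
def dilationNum (p : E) (μ : ℝ) (y : E) : E := (‖y‖ + ⟪p, y⟫) • p + μ • (y - ⟪p, y⟫ • p)

/-- The 1-homogeneous denominator of the dilation with centre `p` and factor `μ`; see
`dilationNum`. -/
def dilationDen (p : E) (μ : ℝ) (y : E) : ℝ := (‖y‖ + ⟪p, y⟫) + μ ^ 2 * (‖y‖ - ⟪p, y⟫)

lemma dilationDen_pos {p y : E} (hp : ‖p‖ = 1) (hy : y ≠ 0) {μ : ℝ} (hμ : μ ≠ 0) :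
    0 < dilationDen p μ y := by
  have hnorm : 0 < ‖y‖ := norm_pos_iff.mpr hy
  have hbound : |⟪p, y⟫| ≤ ‖y‖ := by simpa [hp] using abs_real_inner_le_norm p y
  obtain ⟨hlower, hupper⟩ := abs_le.mp hbound
  have hμ' : 0 < μ ^ 2 := by positivity
  unfold dilationDen
  rcases lt_or_ge 0 ⟪p, y⟫ with h | h
  · linarith [mul_nonneg hμ'.le (sub_nonneg.mpr hupper)]
  · linarith [mul_pos hμ' (show 0 < ‖y‖ - ⟪p, y⟫ by linarith)]

lemma norm_sq_smul_add_smul_sub {p : E} (hp : ‖p‖ = 1) (a μ : ℝ) (v : E) :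
    ‖a • p + μ • (v - ⟪p, v⟫ • p)‖ ^ 2 = a ^ 2 + μ ^ 2 * (‖v‖ ^ 2 - ⟪p, v⟫ ^ 2) := by
  rw [norm_add_sq_real, norm_smul, norm_smul, mul_pow, mul_pow, norm_sub_sq_real, norm_smul,
    mul_pow, hp]
  simp only [real_inner_smul_left, real_inner_smul_right, inner_sub_right,
    real_inner_self_eq_norm_sq, hp, real_inner_comm p v, norm_eq_abs, sq_abs]
  ring

lemma norm_sq_dilationNum {p : E} (hp : ‖p‖ = 1) (μ : ℝ) (y : E) :
    ‖dilationNum p μ y‖ ^ 2 = (‖y‖ + ⟪p, y⟫) * dilationDen p μ y := by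
  rw [dilationNum, norm_sq_smul_add_smul_sub hp, dilationDen]
  ring

lemma hasFDerivAt_norm_of_norm_eq_one {x : E} (hx : ‖x‖ = 1) :
    HasFDerivAt (fun y : E => ‖y‖) (innerSL ℝ x) x := by
  have h := (hasStrictFDerivAt_norm_sq x).hasFDerivAt.sqrt (by simp [hx])
  simpa [hx, ← Nat.cast_smul_eq_nsmul ℝ, smul_smul] using h

lemma norm_sq_fderiv_dilationQuotient {p x : E} (hp : ‖p‖ = 1) (hx : ‖x‖ = 1) {μ : ℝ}
    (hμ : μ ≠ 0) (v : E) :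
    ‖fderiv ℝ (fun y => (dilationDen p μ y)⁻¹ • dilationNum p μ y) x v‖ ^ 2 =
      (μ / dilationDen p μ x) ^ 2 * (‖v‖ ^ 2 - ⟪x, v⟫ ^ 2) := by
  have hx₀ : x ≠ 0 := norm_ne_zero_iff.mp (hx ▸ one_ne_zero)
  have hnorm := hasFDerivAt_norm_of_norm_eq_one hx
  have hinner : HasFDerivAt (fun y => ⟪p, y⟫) (innerSL ℝ p) x := (innerSL ℝ p).hasFDerivAt
  have hf := hnorm.add hinner
  have hD := hf.add ((hnorm.sub hinner).const_mul (μ ^ 2))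
  have hN := (hf.smul_const p).add (((hasFDerivAt_id x).sub (hinner.smul_const p)).const_smul μ)
  refine (norm_sq_fderiv_inv_smul hN hf hD (dilationDen_pos hp hx₀ hμ).ne'
    (norm_sq_dilationNum hp μ) v).trans ?_
  simp only [add_apply, sub_apply,
    smul_apply, ContinuousLinearMap.smulRight_apply,
    ContinuousLinearMap.id_apply, innerSL_apply_apply, smul_eq_mul]
  rw [norm_sq_smul_add_smul_sub hp]
  change _ / dilationDen p μ x ^ 2 = _
  ring

end Homogeneous

section HalfAngle

lemma one_add_cos_eq (θ : ℝ) : 1 + cos θ = 2 * cos (θ / 2) ^ 2 := by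
  rw [cos_sq, mul_div_cancel₀ θ two_ne_zero]
  ring

lemma one_sub_cos_eq (θ : ℝ) : 1 - cos θ = 2 * sin (θ / 2) ^ 2 := by
  rw [sin_sq_eq_half_sub, mul_div_cancel₀ θ two_ne_zero]
  ring

lemma cos_two_mul_arctan (u : ℝ) : cos (2 * arctan u) = (1 - u ^ 2) / (1 + u ^ 2) := by
  rw [cos_two_mul, cos_sq_arctan]
  field_simp
  ring

lemma tan_le_two_mul {x : ℝ} (h₀ : 0 ≤ x) (h₁ : x ≤ π / 3) : tan x ≤ 2 * x := by
  have hcos : 1 / 2 ≤ cos x := by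
    rw [← cos_pi_div_three]
    exact cos_le_cos_of_nonneg_of_le_pi h₀ (by linarith [pi_pos]) h₁
  rw [tan_eq_sin_div_cos, div_le_iff₀ (by linarith)]
  nlinarith [sin_le h₀]

lemma tan_le_one {x : ℝ} (h₀ : -(π / 2) < x) (h₁ : x ≤ π / 4) : tan x ≤ 1 := by
  rw [← tan_pi_div_four]
  exact strictMonoOn_tan.monotoneOn ⟨h₀, by linarith [pi_pos]⟩
    ⟨by linarith [pi_pos], by linarith [pi_pos]⟩ h₁

lemma arctan_le_self {u : ℝ} (hu : 0 ≤ u) : arctan u ≤ u := by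
  simpa only [tan_arctan] using le_tan (arctan_nonneg.mpr hu) (arctan_lt_pi_div_two u)

lemma self_le_two_mul_arctan {u : ℝ} (h₀ : 0 ≤ u) (h₁ : u ≤ 1) : u ≤ 2 * arctan u := by
  have hπ := pi_gt_three
  have htan : tan (u / 2) ≤ u :=
    (tan_le_two_mul (by linarith) (by linarith)).trans_eq (mul_div_cancel₀ u two_ne_zero)
  have harctan := arctan_mono htan
  rw [arctan_tan (by linarith) (by linarith)] at harctan
  linarith

lemma tan_half_pos {r : ℝ} (h₀ : 0 < r) (h₁ : r < π) : 0 < tan (r / 2) :=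
  tan_pos_of_pos_of_lt_pi_div_two (by linarith) (by linarith)

lemma half_le_tan_half {r : ℝ} (h₀ : 0 ≤ r) (h₁ : r < π) : r / 2 ≤ tan (r / 2) :=
  le_tan (by linarith) (by linarith)

lemma tan_half_le {r : ℝ} (h₀ : 0 ≤ r) (h₁ : r ≤ 2 * π / 3) : tan (r / 2) ≤ r :=
  (tan_le_two_mul (by linarith) (by linarith)).trans_eq (mul_div_cancel₀ r two_ne_zero)

lemma quarter_le_sin_half {θ : ℝ} (h₀ : 0 ≤ θ) (h₁ : θ ≤ π) : θ / 4 ≤ sin (θ / 2) := by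
  have hjordan : 2 / π * (θ / 2) ≤ sin (θ / 2) := mul_le_sin (by linarith) (by linarith)
  calc θ / 4 ≤ θ / π := by gcongr; exact pi_le_four
    _ = 2 / π * (θ / 2) := by ring
    _ ≤ sin (θ / 2) := hjordan

end HalfAngle

section GeodesicDistance

variable {x y z p : E3}

lemma norm_eq_one_of_mem_S2 (hx : x ∈ S2) : ‖x‖ = 1 := by
  simpa [S2] using hx

lemma ne_zero_of_mem_S2 (hx : x ∈ S2) : x ≠ 0 :=
  norm_ne_zero_iff.mp (norm_eq_one_of_mem_S2 hx ▸ one_ne_zero)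

lemma neg_mem_S2 (hx : x ∈ S2) : -x ∈ S2 := by
  simpa [S2] using hx

lemma gdist_nonneg (x y : E3) : 0 ≤ gdist x y := arccos_nonneg _

lemma gdist_le_pi (x y : E3) : gdist x y ≤ π := arccos_le_pi _

lemma gdist_comm (x y : E3) : gdist x y = gdist y x := by
  rw [gdist, gdist, real_inner_comm]

lemma gdist_neg_right (x y : E3) : gdist x (-y) = π - gdist x y := by
  rw [gdist, gdist, inner_neg_right, arccos_neg]

lemma gdist_eq_angle (hx : x ∈ S2) (hy : y ∈ S2) :
    gdist x y = InnerProductGeometry.angle x y := by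
  simp [gdist, InnerProductGeometry.angle, norm_eq_one_of_mem_S2 hx, norm_eq_one_of_mem_S2 hy]

lemma gdist_triangle (hx : x ∈ S2) (hy : y ∈ S2) (hz : z ∈ S2) :
    gdist x z ≤ gdist x y + gdist y z := by
  simpa only [gdist_eq_angle, hx, hy, hz] using
    InnerProductGeometry.angle_le_angle_add_angle x y z

lemma cos_gdist (hx : x ∈ S2) (hy : y ∈ S2) : cos (gdist x y) = ⟪x, y⟫ := by
  rw [gdist_eq_angle hx hy, InnerProductGeometry.cos_angle, norm_eq_one_of_mem_S2 hx,
    norm_eq_one_of_mem_S2 hy, mul_one, div_one]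

lemma one_add_inner_eq (hx : x ∈ S2) (hp : p ∈ S2) :
    1 + ⟪x, p⟫ = 2 * cos (gdist x p / 2) ^ 2 := by
  rw [← cos_gdist hx hp, one_add_cos_eq]

lemma one_sub_inner_eq (hx : x ∈ S2) (hp : p ∈ S2) :
    1 - ⟪x, p⟫ = 2 * sin (gdist x p / 2) ^ 2 := by
  rw [← cos_gdist hx hp, one_sub_cos_eq]

end GeodesicDistance

section Mobius

variable {x p : E3} {μ r : ℝ}

lemma mobius_neg_inv (p : E3) (hμ : μ ≠ 0) : mobius (-p) μ⁻¹ = mobius p μ := by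
  funext y
  have hden : (1 + -⟪y, p⟫) + μ⁻¹ ^ 2 * (1 - -⟪y, p⟫) =
      (μ ^ 2)⁻¹ * ((1 + ⟪y, p⟫) + μ ^ 2 * (1 - ⟪y, p⟫)) := by
    field_simp
    ring
  have hnum : ((1 + -⟪y, p⟫) - μ⁻¹ ^ 2 * (1 - -⟪y, p⟫)) • (-p) +
        (2 * μ⁻¹) • (y - -⟪y, p⟫ • -p) =
      (μ ^ 2)⁻¹ • (((1 + ⟪y, p⟫) - μ ^ 2 * (1 - ⟪y, p⟫)) • p + (2 * μ) • (y - ⟪y, p⟫ • p)) := by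
    match_scalars <;> field_simp
    ring
  simp only [mobius, inner_neg_right]
  rw [hden, hnum, smul_smul]
  congr 1
  field_simp

lemma mobiusDil_neg (p : E3) (hr : tan (r / 2) ≠ 0) :
    mobiusDil (-p) r = mobius p (tan (r / 2)) :=
  mobius_neg_inv p hr

lemma inner_mobius (hp : p ∈ S2) (μ : ℝ) (x : E3) :
    ⟪mobius p μ x, p⟫ =
      ((1 + ⟪x, p⟫) - μ ^ 2 * (1 - ⟪x, p⟫)) / ((1 + ⟪x, p⟫) + μ ^ 2 * (1 - ⟪x, p⟫)) := by
  simp only [mobius, inner_add_left, inner_sub_left, real_inner_smul_left,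
    real_inner_self_eq_norm_sq, norm_eq_one_of_mem_S2 hp]
  ring

lemma gdist_mobius (hp : p ∈ S2) (hx : x ∈ S2) (hxp : gdist x p < π) (hμ : 0 ≤ μ) :
    gdist (mobius p μ x) p = 2 * arctan (μ * tan (gdist x p / 2)) := by
  have hθ := gdist_nonneg x p
  have hcos : 0 < cos (gdist x p / 2) := cos_pos_of_mem_Ioo ⟨by linarith, by linarith⟩
  have htan : 0 ≤ tan (gdist x p / 2) :=
    tan_nonneg_of_nonneg_of_le_pi_div_two (by linarith) (by linarith)
  have hinner : ⟪mobius p μ x, p⟫ = cos (2 * arctan (μ * tan (gdist x p / 2))) := by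
    rw [inner_mobius hp, one_add_inner_eq hx hp, one_sub_inner_eq hx hp, cos_two_mul_arctan,
      tan_eq_sin_div_cos]
    field_simp
  rw [gdist, hinner, arccos_cos]
  · linarith [arctan_nonneg.mpr (mul_nonneg hμ htan)]
  · linarith [arctan_lt_pi_div_two (μ * tan (gdist x p / 2))]

lemma homExt_mobius (hp : p ∈ S2) (hμ : μ ≠ 0) {y : E3} (hy : y ≠ 0) :
    homExt (mobius p μ) y = (2 : ℝ) • ((dilationDen p μ y)⁻¹ • dilationNum p μ y) - p := by
  have hnorm : ‖y‖ ≠ 0 := norm_ne_zero_iff.mpr hy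
  have hden : dilationDen p μ y ≠ 0 :=
    (dilationDen_pos (norm_eq_one_of_mem_S2 hp) hy hμ).ne'
  have hscale : (1 + ⟪‖y‖⁻¹ • y, p⟫) + μ ^ 2 * (1 - ⟪‖y‖⁻¹ • y, p⟫) =
      ‖y‖⁻¹ * dilationDen p μ y := by
    rw [real_inner_smul_left, real_inner_comm, dilationDen]
    field_simp
  rw [homExt, mobius, hscale, real_inner_smul_left, real_inner_comm]
  unfold dilationNum dilationDen at hden ⊢
  match_scalars <;> field_simp
  ring

lemma norm_sq_fderiv_homExt_mobius (hp : p ∈ S2) (hx : x ∈ S2) (hμ : μ ≠ 0) (v : E3) :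
    ‖fderiv ℝ (homExt (mobius p μ)) x v‖ ^ 2 =
      (2 * μ / dilationDen p μ x) ^ 2 * (‖v‖ ^ 2 - ⟪x, v⟫ ^ 2) := by
  have hext : homExt (mobius p μ) =ᶠ[nhds x]
      fun y => (2 : ℝ) • ((dilationDen p μ y)⁻¹ • dilationNum p μ y) - p := by
    filter_upwards [isOpen_ne.mem_nhds (ne_zero_of_mem_S2 hx)] with y hy
    exact homExt_mobius hp hμ hy
  have hsmul : fderiv ℝ (fun y => (2 : ℝ) • ((dilationDen p μ y)⁻¹ • dilationNum p μ y)) x =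
      (2 : ℝ) • fderiv ℝ (fun y => (dilationDen p μ y)⁻¹ • dilationNum p μ y) x :=
    congrFun (fderiv_const_smul_field (2 : ℝ)) x
  rw [hext.fderiv_eq, fderiv_sub_const, hsmul, smul_apply, norm_smul, mul_pow,
    norm_sq_fderiv_dilationQuotient (norm_eq_one_of_mem_S2 hp) (norm_eq_one_of_mem_S2 hx) hμ,
    norm_ofNat]
  ring

lemma enDensity_of_norm_sq_fderiv {u : E3 → E3} (hx : x ∈ S2) {k : ℝ}
    (hu : ∀ v, ‖fderiv ℝ (homExt u) x v‖ ^ 2 = k * (‖v‖ ^ 2 - ⟪x, v⟫ ^ 2)) :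
    enDensity u x = 2 * k := by
  have hcoord : ∑ i, ⟪x, e3 i⟫ ^ 2 = 1 := by
    have h := EuclideanSpace.real_norm_sq_eq x
    rw [norm_eq_one_of_mem_S2 hx, one_pow] at h
    simpa [e3, EuclideanSpace.inner_single_right] using h.symm
  have hbasis : ∑ i, ‖e3 i‖ ^ 2 = 3 := by simp [e3]
  simp only [enDensity, hu]
  rw [← Finset.mul_sum, Finset.sum_sub_distrib, hbasis, hcoord]
  ring

lemma sqrt_half_enDensity_mobius (hp : p ∈ S2) (hx : x ∈ S2) (hμ : 0 < μ) :
    √((1 / 2) * enDensity (mobius p μ) x) =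
      μ / (cos (gdist x p / 2) ^ 2 + μ ^ 2 * sin (gdist x p / 2) ^ 2) := by
  have hpos := dilationDen_pos (norm_eq_one_of_mem_S2 hp) (ne_zero_of_mem_S2 hx) hμ.ne'
  have hden : dilationDen p μ x =
      2 * (cos (gdist x p / 2) ^ 2 + μ ^ 2 * sin (gdist x p / 2) ^ 2) := by
    rw [dilationDen, norm_eq_one_of_mem_S2 hx, real_inner_comm, one_add_inner_eq hx hp,
      one_sub_inner_eq hx hp]
    ring
  rw [enDensity_of_norm_sq_fderiv hx (norm_sq_fderiv_homExt_mobius hp hx hμ.ne'), ← mul_assoc,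
    one_div_mul_cancel two_ne_zero, one_mul, sqrt_sq (by positivity), hden,
    mul_div_mul_left _ _ two_ne_zero]

lemma sqrt_confSq (hp : p ∈ S2) (hx : x ∈ S2) (hr : 0 < tan (r / 2)) :
    √(confSq p r x) = tan (r / 2) /
      (tan (r / 2) ^ 2 * cos (gdist x p / 2) ^ 2 + sin (gdist x p / 2) ^ 2) := by
  rw [confSq, mobiusDil, sqrt_half_enDensity_mobius hp hx (inv_pos.mpr hr)]
  field_simp

end Mobius

section Bubble

/-- The model conformal factor `r⁻¹ / (1 + (θ / r)²)` at distance `θ` from a concentration point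
at scale `r`. -/
def bubbleProfile (r θ : ℝ) : ℝ := r⁻¹ / (1 + (r⁻¹ * θ) ^ 2)

variable {r θ : ℝ}

lemma bubbleProfile_eq (hr : r ≠ 0) (θ : ℝ) : bubbleProfile r θ = r / (r ^ 2 + θ ^ 2) := by
  rw [bubbleProfile]
  field_simp

lemma bubbleProfile_le_of_le_add {a b k : ℝ} (hr : 0 < r) (hb : 0 ≤ b) (hab : b ≤ a + k * r) :
    bubbleProfile r a ≤ 2 * (1 + k ^ 2) * bubbleProfile r b := by
  have hsq : b ^ 2 ≤ 2 * (a ^ 2 + (k * r) ^ 2) :=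
    (pow_le_pow_left₀ hb hab 2).trans add_sq_le
  have hden : r ^ 2 + b ^ 2 ≤ 2 * (1 + k ^ 2) * (r ^ 2 + a ^ 2) := by
    nlinarith [sq_nonneg r, mul_nonneg (sq_nonneg k) (sq_nonneg a)]
  rw [bubbleProfile_eq hr.ne', bubbleProfile_eq hr.ne', ← mul_div_assoc,
    div_le_div_iff₀ (by positivity) (by positivity)]
  nlinarith [mul_le_mul_of_nonneg_left hden hr.le]

lemma tan_sq_mul_cos_sq_add_sin_sq_le (hr₀ : 0 ≤ r) (hr₁ : r ≤ 2 * π / 3) (θ : ℝ) :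
    tan (r / 2) ^ 2 * cos (θ / 2) ^ 2 + sin (θ / 2) ^ 2 ≤ r ^ 2 + θ ^ 2 := by
  have htan₀ : 0 ≤ tan (r / 2) :=
    tan_nonneg_of_nonneg_of_le_pi_div_two (by linarith) (by linarith [pi_pos])
  have htan : tan (r / 2) ^ 2 ≤ r ^ 2 := pow_le_pow_left₀ htan₀ (tan_half_le hr₀ hr₁) 2
  have hsin : sin (θ / 2) ^ 2 ≤ (θ / 2) ^ 2 := sin_sq_le_sq
  calc tan (r / 2) ^ 2 * cos (θ / 2) ^ 2 + sin (θ / 2) ^ 2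
      ≤ r ^ 2 * 1 + (θ / 2) ^ 2 := by gcongr; exact cos_sq_le_one _
    _ ≤ r ^ 2 + θ ^ 2 := by linarith [sq_nonneg θ]

lemma sq_add_sq_le_tan_sq_mul_cos_sq_add_sin_sq (hr₀ : 0 ≤ r) (hr₁ : r ≤ π / 2) (hθ₀ : 0 ≤ θ)
    (hθ₁ : θ ≤ π) :
    r ^ 2 + θ ^ 2 ≤ 32 * (tan (r / 2) ^ 2 * cos (θ / 2) ^ 2 + sin (θ / 2) ^ 2) := by
  have hr_le : r / 2 ≤ tan (r / 2) := half_le_tan_half hr₀ (by linarith [pi_pos])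
  have htan_sq : tan (r / 2) ^ 2 ≤ 1 :=
    pow_le_one₀ (by linarith) (tan_le_one (by linarith [pi_pos]) (by linarith))
  have hr : (r / 2) ^ 2 ≤ tan (r / 2) ^ 2 := by gcongr
  have hθ : (θ / 4) ^ 2 ≤ sin (θ / 2) ^ 2 := by gcongr; exact quarter_le_sin_half hθ₀ hθ₁
  -- A weighted mean of `tan² (r / 2) ≤ 1` and `1` is at least `tan² (r / 2)`.
  have htan_le : tan (r / 2) ^ 2 ≤ tan (r / 2) ^ 2 * cos (θ / 2) ^ 2 + sin (θ / 2) ^ 2 := by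
    nlinarith [mul_le_mul_of_nonneg_right htan_sq (sq_nonneg (sin (θ / 2))),
      sin_sq_add_cos_sq (θ / 2)]
  have hsin_le : sin (θ / 2) ^ 2 ≤ tan (r / 2) ^ 2 * cos (θ / 2) ^ 2 + sin (θ / 2) ^ 2 :=
    le_add_of_nonneg_left (by positivity)
  linarith [sq_nonneg r]

end Bubble

section Estimates

variable {x y p : E3} {r : ℝ}

lemma sqrt_confSq_comparable (hp : p ∈ S2) (hx : x ∈ S2) (hr₀ : 0 < r) (hr₁ : r ≤ π / 2) :
    32⁻¹ * bubbleProfile r (gdist x p) ≤ √(confSq p r x) ∧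
      √(confSq p r x) ≤ 32 * bubbleProfile r (gdist x p) := by
  have htan := tan_half_pos hr₀ (by linarith)
  have hupper := tan_sq_mul_cos_sq_add_sin_sq_le hr₀.le (by linarith) (gdist x p)
  have hlower :=
    sq_add_sq_le_tan_sq_mul_cos_sq_add_sin_sq hr₀.le hr₁ (gdist_nonneg x p) (gdist_le_pi x p)
  have hsum : 0 < r ^ 2 + gdist x p ^ 2 := by positivity
  rw [sqrt_confSq hp hx htan, bubbleProfile_eq hr₀.ne']
  set Q := tan (r / 2) ^ 2 * cos (gdist x p / 2) ^ 2 + sin (gdist x p / 2) ^ 2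
  have hQ : 0 < Q := by linarith
  constructor
  · calc 32⁻¹ * (r / (r ^ 2 + gdist x p ^ 2)) = r / 32 / (r ^ 2 + gdist x p ^ 2) := by ring
      _ ≤ tan (r / 2) / Q := by
        gcongr
        linarith [half_le_tan_half hr₀.le (by linarith)]
  · calc tan (r / 2) / Q ≤ r / ((r ^ 2 + gdist x p ^ 2) / 32) := by
          gcongr
          · exact tan_half_le hr₀.le (by linarith)
          · linarith
      _ = 32 * (r / (r ^ 2 + gdist x p ^ 2)) := by field_simp

lemma sqrt_half_enDensity_mobius_tan_comparable (hp : p ∈ S2) (hy : y ∈ S2) (hr₀ : 0 < r)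
    (hr₁ : r ≤ π / 2) :
    32⁻¹ * bubbleProfile r (gdist y (-p)) ≤ √((1 / 2) * enDensity (mobius p (tan (r / 2))) y) ∧
      √((1 / 2) * enDensity (mobius p (tan (r / 2))) y) ≤
        32 * bubbleProfile r (gdist y (-p)) := by
  rw [← mobiusDil_neg p (tan_half_pos hr₀ (by linarith)).ne']
  exact sqrt_confSq_comparable (neg_mem_S2 hp) hy hr₀ hr₁

lemma sqrt_confSq_le_of_gdist_le {k : ℝ} (hp : p ∈ S2) (hx : x ∈ S2) (hy : y ∈ S2) (hr₀ : 0 < r)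
    (hr₁ : r ≤ π / 2) (hxy : gdist x y ≤ k * r) :
    √(confSq p r x) ≤ 32 * (2 * (1 + k ^ 2)) * 32 * √(confSq p r y) := by
  have hdist : gdist y p ≤ gdist x p + k * r := by
    linarith [gdist_triangle hy hx hp, gdist_comm x y]
  calc √(confSq p r x) ≤ 32 * bubbleProfile r (gdist x p) :=
        (sqrt_confSq_comparable hp hx hr₀ hr₁).2
    _ ≤ 32 * (2 * (1 + k ^ 2) * bubbleProfile r (gdist y p)) := by
        gcongr
        exact bubbleProfile_le_of_le_add hr₀ (gdist_nonneg y p) hdist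
    _ = 32 * (2 * (1 + k ^ 2)) * 32 * (32⁻¹ * bubbleProfile r (gdist y p)) := by ring
    _ ≤ 32 * (2 * (1 + k ^ 2)) * 32 * √(confSq p r y) := by
        gcongr
        exact (sqrt_confSq_comparable hp hy hr₀ hr₁).1

lemma gdist_lt_of_mem_gBall {c : E3} {R : ℝ} (hc : c ∈ S2) (hx : x ∈ gBall c R)
    (hy : y ∈ gBall c R) : gdist x y < 2 * R := by
  linarith [gdist_triangle hx.1 hc hy.1, gdist_comm x c, hx.2, hy.2]

lemma gdist_mobiusDil_neg (hp : p ∈ S2) (hx : x ∈ S2) (hr : 0 < tan (r / 2))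
    (hx₀ : 0 < gdist x p) (hx₁ : gdist x p < π) :
    gdist (mobiusDil p r x) (-p) = 2 * arctan (tan (r / 2) / tan (gdist x p / 2)) := by
  have htan : 0 < tan (gdist x p / 2) := tan_half_pos hx₀ hx₁
  rw [gdist_neg_right, mobiusDil, gdist_mobius hp hx hx₁ (inv_pos.mpr hr).le, inv_mul_eq_div,
    ← inv_div, arctan_inv_of_pos (div_pos hr htan)]
  ring

lemma gdist_mobiusDil_neg_comparable (hp : p ∈ S2) (hx : x ∈ S2) (hr : 0 < r)
    (hrx : r ≤ gdist x p) (hx₁ : gdist x p ≤ π / 2) :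
    4⁻¹ * (r / gdist x p) ≤ gdist (mobiusDil p r x) (-p) ∧
      gdist (mobiusDil p r x) (-p) ≤ 4 * (r / gdist x p) := by
  have hr₁ : r ≤ π / 2 := hrx.trans hx₁
  have hθ : 0 < gdist x p := hr.trans_le hrx
  have htan_r := tan_half_pos hr (by linarith)
  have htan_θ := tan_half_pos hθ (by linarith)
  rw [gdist_mobiusDil_neg hp hx htan_r hθ (by linarith)]
  set θ := gdist x p
  have hquot₀ : 0 ≤ tan (r / 2) / tan (θ / 2) := by positivity
  have hquot₁ : tan (r / 2) / tan (θ / 2) ≤ 1 :=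
    div_le_one_of_le₀ (strictMonoOn_tan.monotoneOn ⟨by linarith, by linarith⟩
      ⟨by linarith, by linarith⟩ (by linarith)) htan_θ.le
  constructor
  · calc 4⁻¹ * (r / θ) ≤ r / 2 / θ := by
          rw [div_right_comm]
          linarith [div_nonneg hr.le hθ.le]
      _ ≤ tan (r / 2) / tan (θ / 2) := by
          gcongr
          · exact half_le_tan_half hr.le (by linarith)
          · exact tan_half_le hθ.le (by linarith)
      _ ≤ 2 * arctan (tan (r / 2) / tan (θ / 2)) := self_le_two_mul_arctan hquot₀ hquot₁
  · calc 2 * arctan (tan (r / 2) / tan (θ / 2)) ≤ 2 * (tan (r / 2) / tan (θ / 2)) := by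
          gcongr
          exact arctan_le_self hquot₀
      _ ≤ 2 * (r / (θ / 2)) := by
          gcongr
          · exact tan_half_le hr.le (by linarith)
          · exact half_le_tan_half hθ.le (by linarith)
      _ = 4 * (r / θ) := by ring

end Estimates

/-- Lemma A.1 / `lemma:dilation`: basic properties of the conformal
factors of Möbius dilations `M = M_{x̄,r̄}` and their inverses `M⁻¹ = M_{x̄, ·}` (which is
the dilation with the reciprocal factor). -/
theorem statement11 :
    ∃ C K₀ : ℝ, 0 < C ∧ 0 < K₀ ∧
      ∀ (xb : E3) (rb : ℝ), xb ∈ S2 → rb ∈ Set.Ioc 0 (π / 2) →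
        -- (i) for ρ_M
        (∀ x ∈ S2,
          C⁻¹ * (rb⁻¹ / (1 + (rb⁻¹ * gdist x xb) ^ 2)) ≤ Real.sqrt (confSq xb rb x) ∧
          Real.sqrt (confSq xb rb x) ≤ C * (rb⁻¹ / (1 + (rb⁻¹ * gdist x xb) ^ 2))) ∧
        -- (i) for ρ_{M⁻¹}; `M⁻¹` is the dilation at `xb` with factor `tan(r̄/2)`
        (∀ y ∈ S2,
          C⁻¹ * (rb⁻¹ / (1 + (rb⁻¹ * gdist y (-xb)) ^ 2))
              ≤ Real.sqrt ((1 / 2) * enDensity (mobius xb (Real.tan (rb / 2))) y) ∧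
          Real.sqrt ((1 / 2) * enDensity (mobius xb (Real.tan (rb / 2))) y)
              ≤ C * (rb⁻¹ / (1 + (rb⁻¹ * gdist y (-xb)) ^ 2))) ∧
        -- (ii) uniform comparability of ρ_M on balls of radius 2r̄
        (∀ x ∈ S2, ∀ x₁ ∈ gBall x (2 * rb), ∀ x₂ ∈ gBall x (2 * rb),
          Real.sqrt (confSq xb rb x₁) ≤ K₀ * Real.sqrt (confSq xb rb x₂)) ∧
        -- (iii) distance of images from the antipodal point
        (∀ x ∈ S2, rb ≤ gdist x xb → gdist x xb ≤ π / 2 →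
          C⁻¹ * (rb / gdist x xb) ≤ gdist (mobiusDil xb rb x) (-xb) ∧
          gdist (mobiusDil xb rb x) (-xb) ≤ C * (rb / gdist x xb)) := by
  refine ⟨32, 32 * (2 * (1 + 4 ^ 2)) * 32, by norm_num, by norm_num, ?_⟩
  rintro p r hp ⟨hr₀, hr₁⟩
  refine ⟨fun x hx => sqrt_confSq_comparable hp hx hr₀ hr₁,
    fun y hy => sqrt_half_enDensity_mobius_tan_comparable hp hy hr₀ hr₁,
    fun x hx x₁ hx₁ x₂ hx₂ => ?_, fun x hx hrx hx₁ => ?_⟩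
  · have hdist : gdist x₁ x₂ ≤ 4 * r := by linarith [gdist_lt_of_mem_gBall hx hx₁ hx₂]
    exact sqrt_confSq_le_of_gdist_le hp hx₁.1 hx₂.1 hr₀ hr₁ hdist
  · obtain ⟨hlower, hupper⟩ := gdist_mobiusDil_neg_comparable hp hx hr₀ hrx hx₁
    have hratio : 0 ≤ r / gdist x p := div_nonneg hr₀.le (gdist_nonneg x p)
    exact ⟨by linarith [hratio], by linarith [hratio]⟩
end
end

section
/- There exist universal constants ε₀ > 0 and C₀ < ∞ such that for every ε ∈ (0,ε₀] and every smooth map γ : S¹ → S² ⊂ ℝ³ with ∫_{S¹} |γ'(θ)|² dθ ≤ ε there exists a smooth map w : [0,1]×S¹ → S² ⊂ ℝ³ with w(0,·) = γ, w(1,·) equal to a constant, whose energy satisfies (1/2)∫_{[0,1]×S¹} (|∂_s w|² + |∂_θ w|²) ds dθ ≤ C₀·ε and whose oscillation satisfies sup_{(s,θ),(s',θ')} |w(s,θ) − w(s',θ')| ≤ C₀·√ε. -/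
open MeasureTheory Metric Real Set Filter
open scoped RealInnerProductSpace

noncomputable section

/-!
By Cauchy–Schwarz, a loop of period `T` whose squared speed has integral at most `ε` stays within
`√(T ε)` of its base point `γ 0`. For small `ε` the straight segments from `γ θ` to `γ 0` therefore
avoid the origin, and the contraction `w` is their radial projection to the sphere. Since the
radial projection is Lipschitz away from the origin, `|∂_θ w|` is controlled by `|γ'|` and `|∂_s w|`
by `|γ θ - γ 0| ≤ √(T ε)`.
-/

section Normalize

variable {V : Type*} [NormedAddCommGroup V] [NormedSpace ℝ V]

lemma norm_mul_norm_normalize_sub_normalize_le (a b : V) :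
    ‖a‖ * ‖NormedSpace.normalize a - NormedSpace.normalize b‖ ≤ 2 * ‖a - b‖ := by
  have decomposition : ‖a‖ • (NormedSpace.normalize a - NormedSpace.normalize b) =
      (a - b) + (‖b‖ - ‖a‖) • NormedSpace.normalize b := by
    rw [smul_sub, sub_smul, NormedSpace.norm_smul_normalize, NormedSpace.norm_smul_normalize]
    abel
  have norm_normalize_le : ‖NormedSpace.normalize b‖ ≤ 1 := by
    rcases eq_or_ne b 0 with rfl | hb
    · simp
    · exact (NormedSpace.norm_normalize hb).le
  calc ‖a‖ * ‖NormedSpace.normalize a - NormedSpace.normalize b‖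
      = ‖(a - b) + (‖b‖ - ‖a‖) • NormedSpace.normalize b‖ := by
        rw [← decomposition, norm_smul, norm_norm]
    _ ≤ ‖a - b‖ + |‖b‖ - ‖a‖| * ‖NormedSpace.normalize b‖ := by
        grw [norm_add_le, norm_smul, Real.norm_eq_abs]
    _ ≤ ‖a - b‖ + ‖b - a‖ * 1 := by grw [abs_norm_sub_norm_le, norm_normalize_le]
    _ = 2 * ‖a - b‖ := by rw [norm_sub_rev b a]; ring

lemma norm_fderiv_normalize_le {a : V} (ha : a ≠ 0) :
    ‖fderiv ℝ NormedSpace.normalize a‖ ≤ 2 / ‖a‖ := by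
  refine norm_fderiv_le_of_lip' ℝ (by positivity) (.of_forall fun b => ?_)
  have lipschitz := norm_mul_norm_normalize_sub_normalize_le a b
  rw [norm_sub_rev, norm_sub_rev b, div_mul_eq_mul_div, le_div_iff₀' (norm_pos_iff.2 ha)]
  exact lipschitz

variable {E : Type*} [NormedAddCommGroup E] [InnerProductSpace ℝ E]

lemma contDiffAt_normalize {n : WithTop ℕ∞} {a : E} (ha : a ≠ 0) :
    ContDiffAt ℝ n NormedSpace.normalize a :=
  ((contDiffAt_norm ℝ ha).inv (norm_ne_zero_iff.2 ha)).smul contDiffAt_id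

lemma norm_deriv_normalize_comp_le {f : ℝ → E} {f' : E} {x : ℝ} (hf : HasDerivAt f f' x)
    (hfx : f x ≠ 0) :
    ‖deriv (fun t => NormedSpace.normalize (f t)) x‖ ≤ 2 / ‖f x‖ * ‖f'‖ := by
  have differentiableAt_normalize : DifferentiableAt ℝ NormedSpace.normalize (f x) :=
    (contDiffAt_normalize (n := 1) hfx).differentiableAt one_ne_zero
  have chain_rule := differentiableAt_normalize.hasFDerivAt.comp_hasDerivAt x hf
  rw [Function.comp_def] at chain_rule
  grw [chain_rule.deriv, ContinuousLinearMap.le_opNorm, norm_fderiv_normalize_le hfx]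

end Normalize

section LoopEnergy

lemma sq_integral_le_measureReal_univ_mul_integral_sq {α : Type*} [MeasurableSpace α]
    {μ : Measure α} [IsFiniteMeasure μ] {f : α → ℝ} (hf : MemLp f 2 μ) :
    (∫ x, f x ∂μ) ^ 2 ≤ μ.real univ * ∫ x, f x ^ 2 ∂μ := by
  rcases eq_zero_or_neZero μ with rfl | _
  · simp
  have univ_pos : 0 < μ.real univ := measureReal_univ_pos
  have jensen : (⨍ x, f x ∂μ) ^ 2 ≤ ⨍ x, f x ^ 2 ∂μ :=
    even_two.convexOn_pow.map_average_le (by fun_prop) isClosed_univ (by simp)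
      (hf.integrable one_le_two) hf.integrable_sq
  rw [average_eq, average_eq, smul_eq_mul, smul_eq_mul, mul_pow, inv_pow] at jensen
  field_simp at jensen
  exact jensen

variable {V : Type*} [NormedAddCommGroup V] [NormedSpace ℝ V] {γ : ℝ → V}

lemma sq_norm_sub_le_mul_integral_sq_norm_deriv (hγ : ContDiff ℝ 1 γ) {a b : ℝ} (hab : a ≤ b) :
    ‖γ b - γ a‖ ^ 2 ≤ (b - a) * ∫ θ in a..b, ‖deriv γ θ‖ ^ 2 := by
  have continuous_speed : Continuous fun θ => ‖deriv γ θ‖ := hγ.continuous_deriv_one.norm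
  have dist_le_length : ‖γ b - γ a‖ ≤ ∫ θ in a..b, ‖deriv γ θ‖ :=
    norm_sub_le_integral_of_norm_deriv_le_of_le hab hγ.continuous.continuousOn
      (hγ.differentiable one_ne_zero).differentiableOn (.of_forall fun _ _ => le_rfl)
      (continuous_speed.intervalIntegrable _ _)
  have memLp_speed : MemLp (fun θ => ‖deriv γ θ‖) 2 (volume.restrict (Ioc a b)) :=
    (memLp_two_iff_integrable_sq continuous_speed.aestronglyMeasurable).2
      (continuous_speed.pow 2).integrableOn_Ioc
  have cauchy_schwarz := sq_integral_le_measureReal_univ_mul_integral_sq memLp_speed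
  rw [measureReal_restrict_apply_univ, Real.volume_real_Ioc_of_le hab] at cauchy_schwarz
  grw [dist_le_length]
  simpa only [intervalIntegral.integral_of_le hab] using cauchy_schwarz

lemma sq_norm_sub_le_period_mul_integral_sq_norm_deriv (hγ : ContDiff ℝ 1 γ) {T : ℝ} (hT : 0 < T)
    (hper : Function.Periodic γ T) (x y : ℝ) :
    ‖γ x - γ y‖ ^ 2 ≤ T * ∫ θ in 0..T, ‖deriv γ θ‖ ^ 2 := by
  obtain ⟨z, ⟨hyz, hzT⟩, hxz⟩ := hper.exists_mem_Ico hT x y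
  have continuous_sq_speed : Continuous fun θ => ‖deriv γ θ‖ ^ 2 :=
    hγ.continuous_deriv_one.norm.pow 2
  have periodic_sq_speed : Function.Periodic (fun θ => ‖deriv γ θ‖ ^ 2) T := fun θ => by
    simp only [← deriv_comp_add_const, hper.funext]
  calc ‖γ x - γ y‖ ^ 2 = ‖γ z - γ y‖ ^ 2 := by rw [hxz]
    _ ≤ (z - y) * ∫ θ in y..z, ‖deriv γ θ‖ ^ 2 :=
        sq_norm_sub_le_mul_integral_sq_norm_deriv hγ hyz
    _ ≤ T * ∫ θ in y..y + T, ‖deriv γ θ‖ ^ 2 := by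
        gcongr ?_ * ?_
        · exact intervalIntegral.integral_nonneg hyz fun _ _ => by positivity
        · linarith
        · exact intervalIntegral.integral_mono_interval le_rfl hyz hzT.le
            (.of_forall fun _ => by positivity) (continuous_sq_speed.intervalIntegrable _ _)
    _ = T * ∫ θ in 0..T, ‖deriv γ θ‖ ^ 2 := by
        rw [periodic_sq_speed.intervalIntegral_add_eq y 0, zero_add]

end LoopEnergy

section CylinderEnergy

variable {V : Type*} [NormedAddCommGroup V] [NormedSpace ℝ V]

/-- The Dirichlet energy of a map on the flat cylinder `[0,1] × ℝ/Tℤ`, encoded as a function of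
`s` and `θ` and integrated over the fundamental domain `[0,1] × [0,T]`. -/
def cylinderEnergy (T : ℝ) (w : ℝ → ℝ → V) : ℝ :=
  (1 / 2) * ∫ s in (0 : ℝ)..1, ∫ θ in (0 : ℝ)..T,
    (‖deriv (fun t => w t θ) s‖ ^ 2 + ‖deriv (w s) θ‖ ^ 2)

lemma cylinderEnergy_le_of_density_le {T : ℝ} (hT : 0 ≤ T) {w : ℝ → ℝ → V} {g : ℝ → ℝ}
    (hg : IntervalIntegrable g volume 0 T)
    (hwg : ∀ s ∈ Icc (0 : ℝ) 1, ∀ θ,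
      ‖deriv (fun t => w t θ) s‖ ^ 2 + ‖deriv (w s) θ‖ ^ 2 ≤ g θ) :
    cylinderEnergy T w ≤ (1 / 2) * ∫ θ in 0..T, g θ := by
  have circle_bound : ∀ s ∈ uIoc (0 : ℝ) 1, ‖∫ θ in (0 : ℝ)..T,
      (‖deriv (fun t => w t θ) s‖ ^ 2 + ‖deriv (w s) θ‖ ^ 2)‖ ≤ ∫ θ in 0..T, g θ := by
    intro s hs
    rw [uIoc_of_le zero_le_one] at hs
    refine intervalIntegral.norm_integral_le_of_norm_le hT (.of_forall fun θ _ => ?_) hg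
    rw [Real.norm_of_nonneg (by positivity)]
    exact hwg s (Ioc_subset_Icc_self hs) θ
  have cylinder_bound := intervalIntegral.norm_integral_le_of_norm_le_const circle_bound
  rw [sub_zero, abs_one, mul_one] at cylinder_bound
  exact mul_le_mul_of_nonneg_left ((le_abs_self _).trans cylinder_bound) (by norm_num)

end CylinderEnergy

section Cone

variable {V : Type*} [NormedAddCommGroup V] [NormedSpace ℝ V]
  {χ : ℝ → ℝ} {γ : ℝ → V} {c : V} {s θ : ℝ}

/-- The straight-line homotopy contracting the curve `γ` to the apex `c`; the function `χ`
reparametrizes the segments, so that a smooth step makes the homotopy constant past each end. -/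
def cone (χ : ℝ → ℝ) (c : V) (γ : ℝ → V) (s θ : ℝ) : V :=
  AffineMap.lineMap (γ θ) c (χ s)

lemma norm_sub_norm_le_norm_cone (hχ : χ s ∈ Icc (0 : ℝ) 1) :
    ‖γ θ‖ - ‖γ θ - c‖ ≤ ‖cone χ c γ s θ‖ := by
  have dist_le : ‖γ θ - cone χ c γ s θ‖ ≤ ‖γ θ - c‖ := by
    rw [← dist_eq_norm, cone, dist_left_lineMap, dist_eq_norm, Real.norm_of_nonneg hχ.1]
    exact mul_le_of_le_one_left (norm_nonneg _) hχ.2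
  linarith [norm_sub_norm_le (γ θ) (cone χ c γ s θ)]

lemma norm_cone_sub_apex_le (hχ : χ s ∈ Icc (0 : ℝ) 1) :
    ‖cone χ c γ s θ - c‖ ≤ ‖γ θ - c‖ := by
  rw [← dist_eq_norm, cone, dist_lineMap_right, dist_eq_norm,
    Real.norm_of_nonneg (sub_nonneg.2 hχ.2)]
  exact mul_le_of_le_one_left (norm_nonneg _) (sub_le_self _ hχ.1)

lemma contDiff_cone {n : WithTop ℕ∞} (hχ : ContDiff ℝ n χ) (hγ : ContDiff ℝ n γ) :
    ContDiff ℝ n fun p : ℝ × ℝ => cone χ c γ p.1 p.2 := by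
  simp only [cone, AffineMap.lineMap_apply_module]
  fun_prop

lemma hasDerivAt_cone_fst (hχ : DifferentiableAt ℝ χ s) :
    HasDerivAt (fun t => cone χ c γ t θ) (deriv χ s • (c - γ θ)) s :=
  AffineMap.hasDerivAt_lineMap.scomp s hχ.hasDerivAt

lemma hasDerivAt_cone_snd (hγ : DifferentiableAt ℝ γ θ) :
    HasDerivAt (cone χ c γ s) ((1 - χ s) • deriv γ θ) θ := by
  have affine_deriv := (hγ.hasDerivAt.const_smul (1 - χ s)).add_const (χ s • c)
  exact affine_deriv.congr_of_eventuallyEq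
    (.of_forall fun _ => AffineMap.lineMap_apply_module _ _ _)

end Cone

section SphericalCone

variable {V : Type*} [NormedAddCommGroup V] [NormedSpace ℝ V]
  {χ : ℝ → ℝ} {γ : ℝ → V} {c : V} {s θ : ℝ}

/-- The radial projection of `cone χ c γ` to the unit sphere, meaningful where the cone avoids the
origin. -/
def sphericalCone (χ : ℝ → ℝ) (c : V) (γ : ℝ → V) (s θ : ℝ) : V :=
  NormedSpace.normalize (cone χ c γ s θ)

lemma sphericalCone_of_eq_zero (hχ : χ s = 0) (hγ : ‖γ θ‖ = 1) :
    sphericalCone χ c γ s θ = γ θ := by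
  simp [sphericalCone, cone, hχ, NormedSpace.normalize_eq_self_of_norm_eq_one hγ]

lemma sphericalCone_of_eq_one (hχ : χ s = 1) (hc : ‖c‖ = 1) : sphericalCone χ c γ s θ = c := by
  simp [sphericalCone, cone, hχ, NormedSpace.normalize_eq_self_of_norm_eq_one hc]

lemma norm_sphericalCone_sub_apex_le (hχ : χ s ∈ Icc (0 : ℝ) 1) (hc : ‖c‖ = 1) :
    ‖sphericalCone χ c γ s θ - c‖ ≤ 2 * ‖γ θ - c‖ := by
  have lipschitz := norm_mul_norm_normalize_sub_normalize_le c (cone χ c γ s θ)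
  rw [hc, one_mul, NormedSpace.normalize_eq_self_of_norm_eq_one hc, norm_sub_rev,
    norm_sub_rev c] at lipschitz
  grw [sphericalCone, lipschitz, norm_cone_sub_apex_le hχ]

lemma norm_sphericalCone_sub_sphericalCone_le {d : ℝ} {s' θ' : ℝ}
    (hχ_mem : ∀ s, χ s ∈ Icc (0 : ℝ) 1) (hc : ‖c‖ = 1) (hd : ∀ θ, ‖γ θ - c‖ ≤ d) :
    ‖sphericalCone χ c γ s θ - sphericalCone χ c γ s' θ'‖ ≤ 4 * d := by
  have near_apex s θ : ‖sphericalCone χ c γ s θ - c‖ ≤ 2 * d := by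
    grw [norm_sphericalCone_sub_apex_le (hχ_mem s) hc, hd θ]
  grw [norm_sub_le_norm_sub_add_norm_sub _ c, norm_sub_rev c, near_apex, near_apex]
  exact le_of_eq (by ring)

end SphericalCone

section SphericalConeDerivatives

variable {E : Type*} [NormedAddCommGroup E] [InnerProductSpace ℝ E]
  {χ : ℝ → ℝ} {γ : ℝ → E} {c : E} {s θ : ℝ}

lemma contDiff_sphericalCone {n : WithTop ℕ∞} (hχ : ContDiff ℝ n χ) (hγ : ContDiff ℝ n γ)
    (hne : ∀ s θ, cone χ c γ s θ ≠ 0) :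
    ContDiff ℝ n fun p : ℝ × ℝ => sphericalCone χ c γ p.1 p.2 :=
  contDiff_iff_contDiffAt.2 fun p =>
    (contDiffAt_normalize (hne p.1 p.2)).comp p (contDiff_cone hχ hγ).contDiffAt

lemma norm_deriv_sphericalCone_fst_le (hχ : DifferentiableAt ℝ χ s)
    (hne : cone χ c γ s θ ≠ 0) :
    ‖deriv (fun t => sphericalCone χ c γ t θ) s‖ ≤
      2 / ‖cone χ c γ s θ‖ * (|deriv χ s| * ‖γ θ - c‖) := by
  have bound := norm_deriv_normalize_comp_le (hasDerivAt_cone_fst hχ) hne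
  rwa [norm_smul, Real.norm_eq_abs, norm_sub_rev] at bound

lemma norm_deriv_sphericalCone_snd_le (hχ : χ s ∈ Icc (0 : ℝ) 1) (hγ : DifferentiableAt ℝ γ θ)
    (hne : cone χ c γ s θ ≠ 0) :
    ‖deriv (sphericalCone χ c γ s) θ‖ ≤ 2 / ‖cone χ c γ s θ‖ * ‖deriv γ θ‖ := by
  have bound := norm_deriv_normalize_comp_le (hasDerivAt_cone_snd hγ) hne
  rw [norm_smul, Real.norm_of_nonneg (sub_nonneg.2 hχ.2)] at bound
  refine bound.trans (mul_le_mul_of_nonneg_left ?_ (by positivity))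
  exact mul_le_of_le_one_left (norm_nonneg _) (sub_le_self _ hχ.1)

lemma cylinderEnergy_sphericalCone_le {M r d T : ℝ} (hT : 0 ≤ T) (hχ : Differentiable ℝ χ)
    (hχ_mem : ∀ s, χ s ∈ Icc (0 : ℝ) 1) (hχ_deriv : ∀ s ∈ Icc (0 : ℝ) 1, |deriv χ s| ≤ M)
    (hγ : ContDiff ℝ 1 γ) (hd : ∀ θ, ‖γ θ - c‖ ≤ d) (hr : 0 < r)
    (hcone : ∀ s θ, r ≤ ‖cone χ c γ s θ‖) :
    cylinderEnergy T (sphericalCone χ c γ) ≤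
      2 / r ^ 2 * (T * (M * d) ^ 2 + ∫ θ in 0..T, ‖deriv γ θ‖ ^ 2) := by
  have hne s θ : cone χ c γ s θ ≠ 0 := norm_pos_iff.1 (hr.trans_le (hcone s θ))
  have continuous_sq_speed : Continuous fun θ => ‖deriv γ θ‖ ^ 2 :=
    hγ.continuous_deriv_one.norm.pow 2
  have density_le : ∀ s ∈ Icc (0 : ℝ) 1, ∀ θ,
      ‖deriv (fun t => sphericalCone χ c γ t θ) s‖ ^ 2 + ‖deriv (sphericalCone χ c γ s) θ‖ ^ 2 ≤
        (2 / r) ^ 2 * ((M * d) ^ 2 + ‖deriv γ θ‖ ^ 2) := by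
    intro s hs θ
    have hM : 0 ≤ M := (abs_nonneg _).trans (hχ_deriv s hs)
    have hd_nonneg : 0 ≤ d := (norm_nonneg _).trans (hd θ)
    grw [norm_deriv_sphericalCone_fst_le hχ.differentiableAt (hne s θ),
      norm_deriv_sphericalCone_snd_le (hχ_mem s) (hγ.differentiable one_ne_zero θ) (hne s θ),
      hχ_deriv s hs, hd θ, ← hcone s θ]
    exact le_of_eq (by ring)
  refine (cylinderEnergy_le_of_density_le hT
    ((by fun_prop : Continuous _).intervalIntegrable _ _) density_le).trans_eq ?_
  rw [intervalIntegral.integral_const_mul, intervalIntegral.integral_add (by simp)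
    (continuous_sq_speed.intervalIntegrable _ _), intervalIntegral.integral_const, sub_zero,
    smul_eq_mul]
  ring

end SphericalConeDerivatives

lemma exists_abs_deriv_smoothTransition_le :
    ∃ M, ∀ s ∈ Icc (0 : ℝ) 1, |deriv Real.smoothTransition s| ≤ M :=
  isCompact_Icc.exists_bound_of_continuousOn
    (Real.smoothTransition.contDiff (n := 1)).continuous_deriv_one.continuousOn

theorem statement13_general {T : ℝ} (hT : 0 < T) :
    ∃ ε₀ C₀ : ℝ, 0 < ε₀ ∧ 0 < C₀ ∧
      ∀ (E : Type*) [NormedAddCommGroup E] [InnerProductSpace ℝ E] (n : ℕ∞), 1 ≤ n →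
      ∀ ε ≤ ε₀, ∀ γ : ℝ → E, ContDiff ℝ n γ → Function.Periodic γ T →
        (∀ θ, γ θ ∈ sphere (0 : E) 1) → (∫ θ in (0 : ℝ)..T, ‖deriv γ θ‖ ^ 2) ≤ ε →
        ∃ w : ℝ → ℝ → E,
          ContDiff ℝ n (fun p : ℝ × ℝ => w p.1 p.2) ∧
          (∀ s, Function.Periodic (w s) T) ∧
          (∀ s θ, w s θ ∈ sphere (0 : E) 1) ∧
          (∀ θ, w 0 θ = γ θ) ∧
          (∃ c : E, ∀ θ, w 1 θ = c) ∧
          cylinderEnergy T w ≤ C₀ * ε ∧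
          (∀ s ∈ Icc (0 : ℝ) 1, ∀ s' ∈ Icc (0 : ℝ) 1, ∀ θ θ' : ℝ,
              ‖w s θ - w s' θ'‖ ≤ C₀ * √ε) := by
  obtain ⟨M, hM⟩ := exists_abs_deriv_smoothTransition_le
  refine ⟨1 / (4 * T), 8 * (T ^ 2 * M ^ 2 + 1) + 4 * √T, by positivity, by positivity, ?_⟩
  intro E _ _ n hn ε hε γ hγ hper hγ_mem hγε
  have hγ_one : ContDiff ℝ 1 γ := hγ.of_le (by exact_mod_cast hn)
  have hγ_norm θ : ‖γ θ‖ = 1 := mem_sphere_zero_iff_norm.1 (hγ_mem θ)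
  have hε_nonneg : 0 ≤ ε :=
    (intervalIntegral.integral_nonneg hT.le fun _ _ => by positivity).trans hγε
  have dist_base θ : ‖γ θ - γ 0‖ ≤ √(T * ε) := Real.le_sqrt_of_sq_le <| by
    grw [sq_norm_sub_le_period_mul_integral_sq_norm_deriv hγ_one hT hper, hγε]
  have sqrt_le_half : √(T * ε) ≤ 1 / 2 := by
    rw [Real.sqrt_le_left (by norm_num)]
    grw [hε]
    exact le_of_eq (by field_simp; norm_num)
  have hχ_mem s : Real.smoothTransition s ∈ Icc (0 : ℝ) 1 :=
    ⟨Real.smoothTransition.nonneg s, Real.smoothTransition.le_one s⟩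
  have cone_far s θ : 1 / 2 ≤ ‖cone Real.smoothTransition (γ 0) γ s θ‖ := by
    linarith [norm_sub_norm_le_norm_cone (γ := γ) (c := γ 0) (θ := θ) (hχ_mem s), hγ_norm θ,
      dist_base θ]
  have cone_ne s θ : cone Real.smoothTransition (γ 0) γ s θ ≠ 0 :=
    norm_pos_iff.1 (one_half_pos.trans_le (cone_far s θ))
  refine ⟨sphericalCone Real.smoothTransition (γ 0) γ,
    contDiff_sphericalCone Real.smoothTransition.contDiff hγ cone_ne,
    fun s θ => by simp only [sphericalCone, cone, hper θ],
    fun s θ => mem_sphere_zero_iff_norm.2 (NormedSpace.norm_normalize (cone_ne s θ)),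
    fun θ => sphericalCone_of_eq_zero Real.smoothTransition.zero (hγ_norm θ),
    ⟨γ 0, fun θ => sphericalCone_of_eq_one Real.smoothTransition.one (hγ_norm 0)⟩, ?_, ?_⟩
  · grw [cylinderEnergy_sphericalCone_le hT.le
      ((Real.smoothTransition.contDiff (n := 1)).differentiable one_ne_zero) hχ_mem hM hγ_one
      dist_base one_half_pos cone_far, hγε, mul_pow, Real.sq_sqrt (by positivity)]
    nlinarith [mul_nonneg (Real.sqrt_nonneg T) hε_nonneg]
  · intro s _ s' _ θ θ'
    grw [norm_sphericalCone_sub_sphericalCone_le hχ_mem (hγ_norm 0) dist_base,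
      Real.sqrt_mul hT.le]
    nlinarith [mul_nonneg (by positivity : 0 ≤ T ^ 2 * M ^ 2 + 1) (Real.sqrt_nonneg ε)]

/-- a loop in `S²` with small angular energy can be contracted to a point
on a unit cylinder with energy of the same order and oscillation of order `√ε`. -/
theorem statement13 :
    ∃ ε₀ C₀ : ℝ, 0 < ε₀ ∧ 0 < C₀ ∧
      ∀ ε : ℝ, ε ∈ Set.Ioc 0 ε₀ →
      ∀ γ : ℝ → E3, ContDiff ℝ (⊤ : ℕ∞) γ → (∀ θ, γ (θ + 2 * π) = γ θ) → (∀ θ, γ θ ∈ S2) →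
        (∫ θ in (0 : ℝ)..(2 * π), ‖deriv γ θ‖ ^ 2) ≤ ε →
        ∃ w : ℝ → ℝ → E3,
          ContDiff ℝ (⊤ : ℕ∞) (fun p : ℝ × ℝ => w p.1 p.2) ∧
          (∀ s θ, w s (θ + 2 * π) = w s θ) ∧
          (∀ s θ, w s θ ∈ S2) ∧
          (∀ θ, w 0 θ = γ θ) ∧
          (∃ c : E3, ∀ θ, w 1 θ = c) ∧
          (1 / 2) * (∫ s in (0 : ℝ)..1, ∫ θ in (0 : ℝ)..(2 * π),
              (‖deriv (fun t => w t θ) s‖ ^ 2 + ‖deriv (w s) θ‖ ^ 2)) ≤ C₀ * ε ∧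
          (∀ s ∈ Set.Icc (0 : ℝ) 1, ∀ s' ∈ Set.Icc (0 : ℝ) 1, ∀ θ θ' : ℝ,
              ‖w s θ - w s' θ'‖ ≤ C₀ * Real.sqrt ε) := by
  obtain ⟨ε₀, C₀, hε₀, hC₀, contract⟩ := statement13_general two_pi_pos
  exact ⟨ε₀, C₀, hε₀, hC₀, fun ε hε => contract E3 ⊤ le_top ε hε.2⟩
end
end

section
/- There exists a universal constant c > 0 such that the following holds. For all unit vectors p, q ∈ ℝ³ and all vectors a₁, a₂, b₁, b₂ ∈ ℝ³ such that {a₁, a₂} is an orthonormal basis of the orthogonal complement p^⊥ = {x ∈ ℝ³ : ⟨x,p⟩ = 0} and b₁, b₂ ∈ q^⊥, one has (|a₁−b₁|² + |a₂−b₂|²)^{1/2} ≥ c·min(|p−q|, |p+q|). -/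
open scoped RealInnerProductSpace

noncomputable section

/-!
Since `bᵢ ⟂ q`, Cauchy–Schwarz gives `|⟪aᵢ, q⟫| = |⟪aᵢ - bᵢ, q⟫| ≤ ‖aᵢ - bᵢ‖`. Summing the squares,
Parseval in `p^⊥` bounds `∑ᵢ ‖aᵢ - bᵢ‖²` below by the squared length `1 - ⟪p, q⟫²` of the projection
of `q` to `p^⊥`, whereas `min(‖p - q‖, ‖p + q‖)² = 2 (1 - |⟪p, q⟫|) ≤ 2 (1 - ⟪p, q⟫²)`.
-/

section RCLike

variable {𝕜 E ι : Type*} [RCLike 𝕜] [NormedAddCommGroup E] [InnerProductSpace 𝕜 E]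

theorem norm_inner_le_norm_sub_mul_norm_of_inner_eq_zero {b q : E} (hb : inner 𝕜 b q = 0) (a : E) :
    ‖inner 𝕜 a q‖ ≤ ‖a - b‖ * ‖q‖ := by
  simpa only [inner_sub_left, hb, sub_zero] using norm_inner_le_norm (𝕜 := 𝕜) (a - b) q

theorem hasSum_norm_hilbertBasis_inner_sq (a : HilbertBasis ι 𝕜 E) (x : E) :
    HasSum (fun i ↦ ‖inner 𝕜 (a i) x‖ ^ 2) (‖x‖ ^ 2) := by
  have parseval := RCLike.hasSum_re 𝕜 (a.hasSum_inner_mul_inner x x)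
  simpa only [inner_mul_symm_re_eq_norm, norm_mul, norm_inner_symm x, ← sq,
    inner_self_eq_norm_sq] using parseval

theorem norm_orthogonalProjectionOnto_orthogonal_span_singleton_sq {p : E} (hp : ‖p‖ = 1) (q : E) :
    ‖(𝕜 ∙ p)ᗮ.orthogonalProjectionOnto q‖ ^ 2 = ‖q‖ ^ 2 - ‖inner 𝕜 p q‖ ^ 2 := by
  have norm_proj : ‖(𝕜 ∙ p).orthogonalProjectionOnto q‖ = ‖inner 𝕜 p q‖ := by
    rw [Submodule.coe_norm, Submodule.coe_orthogonalProjectionOnto_apply,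
      Submodule.starProjection_unit_singleton 𝕜 hp, norm_smul, hp, mul_one]
  rw [Submodule.norm_sq_eq_add_norm_sq_projection q (𝕜 ∙ p), norm_proj, add_sub_cancel_left]

theorem hasSum_norm_inner_sq_of_hilbertBasis_orthogonal_span_singleton {p : E} (hp : ‖p‖ = 1)
    (a : HilbertBasis ι 𝕜 (𝕜 ∙ p)ᗮ) (q : E) :
    HasSum (fun i ↦ ‖inner 𝕜 (a i : E) q‖ ^ 2) (‖q‖ ^ 2 - ‖inner 𝕜 p q‖ ^ 2) := by
  simpa only [Submodule.inner_orthogonalProjectionOnto_eq_of_mem_left,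
    norm_orthogonalProjectionOnto_orthogonal_span_singleton_sq hp] using
    hasSum_norm_hilbertBasis_inner_sq a ((𝕜 ∙ p)ᗮ.orthogonalProjectionOnto q)

theorem norm_sq_sub_norm_inner_sq_le_mul_norm_sq {p q : E} (hp : ‖p‖ = 1)
    (a : HilbertBasis ι 𝕜 (𝕜 ∙ p)ᗮ) {b : ι → E} (hb : ∀ i, inner 𝕜 (b i) q = 0) {S : ℝ}
    (hS : HasSum (fun i ↦ ‖(a i : E) - b i‖ ^ 2) S) :
    ‖q‖ ^ 2 - ‖inner 𝕜 p q‖ ^ 2 ≤ S * ‖q‖ ^ 2 := by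
  refine hasSum_le (fun i ↦ ?_)
    (hasSum_norm_inner_sq_of_hilbertBasis_orthogonal_span_singleton hp a q)
    (hS.mul_right (‖q‖ ^ 2))
  rw [← mul_pow]
  gcongr
  exact norm_inner_le_norm_sub_mul_norm_of_inner_eq_zero (hb i) (a i)

theorem exists_orthonormalBasis_orthogonal_span_singleton [Fintype ι] {p : E} (hp : p ≠ 0)
    {v : ι → E} (hv : Orthonormal 𝕜 v) (hvp : ∀ i, inner 𝕜 (v i) p = 0)
    (hcard : Fintype.card ι + 1 = Module.finrank 𝕜 E) :
    ∃ a : OrthonormalBasis ι 𝕜 (𝕜 ∙ p)ᗮ, ∀ i, (a i : E) = v i := by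
  have : Fact (Module.finrank 𝕜 E = Fintype.card ι + 1) := ⟨hcard.symm⟩
  have : FiniteDimensional 𝕜 E := .of_fact_finrank_eq_succ (Fintype.card ι)
  have mem (i : ι) : v i ∈ (𝕜 ∙ p)ᗮ := Submodule.mem_orthogonal_singleton_iff_inner_left.2 (hvp i)
  have ortho := hv.codRestrict (𝕜 ∙ p)ᗮ mem
  have span_eq_top := ortho.linearIndependent.span_eq_top_of_card_eq_finrank'
    (Submodule.finrank_orthogonal_span_singleton hp).symm
  refine ⟨OrthonormalBasis.mk ortho span_eq_top.ge, fun i ↦ ?_⟩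
  rw [OrthonormalBasis.coe_mk, Set.val_codRestrict_apply]

end RCLike

section Real

variable {E ι : Type*} [NormedAddCommGroup E] [InnerProductSpace ℝ E]

theorem min_norm_sub_norm_add_sq (x y : E) :
    min ‖x - y‖ ‖x + y‖ ^ 2 = ‖x‖ ^ 2 + ‖y‖ ^ 2 - 2 * |⟪x, y⟫| := by
  have sq_min : min ‖x - y‖ ‖x + y‖ ^ 2 = min (‖x - y‖ ^ 2) (‖x + y‖ ^ 2) :=
    (pow_left_monotoneOn (n := 2)).map_min (norm_nonneg _) (norm_nonneg _)
  rw [sq_min, norm_sub_sq_real, norm_add_sq_real]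
  rcases abs_cases ⟪x, y⟫ with ⟨h, _⟩ | ⟨h, _⟩ <;> rw [h]
  · rw [min_eq_left (by linarith)]; ring
  · rw [min_eq_right (by linarith)]; ring

theorem min_norm_sub_norm_add_sq_le {p q : E} (hp : ‖p‖ = 1) (hq : ‖q‖ = 1) :
    min ‖p - q‖ ‖p + q‖ ^ 2 ≤ 2 * (1 - ⟪p, q⟫ ^ 2) := by
  have abs_le_one : |⟪p, q⟫| ≤ 1 := by simpa only [hp, hq, mul_one] using abs_real_inner_le_norm p q
  have sq_le_abs : ⟪p, q⟫ ^ 2 ≤ |⟪p, q⟫| := by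
    simpa only [sq_abs] using pow_le_of_le_one (abs_nonneg _) abs_le_one two_ne_zero
  rw [min_norm_sub_norm_add_sq, hp, hq]
  linarith

/-- The constant `1 / √2` is optimal: equality holds if `q = a j`, `b j = 0`, and `b i = a i` for
`i ≠ j`. -/
theorem statement14_general {p q : E} (hp : ‖p‖ = 1) (hq : ‖q‖ = 1) (a : HilbertBasis ι ℝ (ℝ ∙ p)ᗮ)
    {b : ι → E} (hb : ∀ i, ⟪b i, q⟫ = 0) {S : ℝ}
    (hS : HasSum (fun i ↦ ‖(a i : E) - b i‖ ^ 2) S) :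
    1 / √2 * min ‖p - q‖ ‖p + q‖ ≤ √S := by
  have one_sub_le : 1 - ⟪p, q⟫ ^ 2 ≤ S := by
    simpa only [hq, one_pow, mul_one, Real.norm_eq_abs, sq_abs] using
      norm_sq_sub_norm_inner_sq_le_mul_norm_sq hp a hb hS
  apply Real.le_sqrt_of_sq_le
  rw [mul_pow, div_pow, one_pow, Real.sq_sqrt zero_le_two]
  linarith [min_norm_sub_norm_add_sq_le hp hq]

end Real

/-- for orthonormal bases of tangent planes, the distance between the
frames controls the distance between the base points in `ℂP¹` (antipodal points
identified). -/
theorem statement14 :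
    ∃ c : ℝ, 0 < c ∧
      ∀ p q a₁ a₂ b₁ b₂ : E3,
        ‖p‖ = 1 → ‖q‖ = 1 →
        ⟪a₁, p⟫ = 0 → ⟪a₂, p⟫ = 0 → ‖a₁‖ = 1 → ‖a₂‖ = 1 → ⟪a₁, a₂⟫ = 0 →
        ⟪b₁, q⟫ = 0 → ⟪b₂, q⟫ = 0 →
        c * min ‖p - q‖ ‖p + q‖ ≤ Real.sqrt (‖a₁ - b₁‖ ^ 2 + ‖a₂ - b₂‖ ^ 2) := by
  refine ⟨1 / √2, by positivity, fun p q a₁ a₂ b₁ b₂ hp hq ha₁p ha₂p ha₁ ha₂ ha₁₂ hb₁ hb₂ ↦ ?_⟩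
  obtain ⟨a, ha⟩ := exists_orthonormalBasis_orthogonal_span_singleton (v := ![a₁, a₂])
    (norm_ne_zero_iff.1 (hp.trans_ne one_ne_zero))
    (by simp [orthonormal_vecCons_iff, ha₁, ha₂, ha₁₂])
    (Fin.forall_fin_two.2 ⟨ha₁p, ha₂p⟩) (by simp)
  simpa [ha] using statement14_general hp hq a.toHilbertBasis (b := ![b₁, b₂])
    (Fin.forall_fin_two.2 ⟨hb₁, hb₂⟩) (hasSum_fintype _)
end
end

section
/- Let D ⊂ ℝ² be the open unit disc and let h : cl(D) → ℝⁿ be continuous on the closed disc, C¹ up to the boundary, with each component harmonic in D. Write ∂_r h and ∂_θ h for the radial (outward normal) and angular (tangential) derivatives of h on ∂D. Then: (i) ∫_{∂D} |∂_r h|² dS = ∫_{∂D} |∂_θ h|² dS; and (ii) ∫_D |∇h|² dx ≤ osc_{∂D}(h)·∫_{∂D} |∂_r h| dS ≤ √(2π)·osc_{∂D}(h)·(∫_{∂D} |∂_θ h|² dS)^{1/2}, where osc_{∂D}(h) := sup_{x,y∈∂D} |h(x)−h(y)|. -/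
open MeasureTheory Metric Real

noncomputable section

abbrev E2 : Type := EuclideanSpace ℝ (Fin 2)

def e2 (i : Fin 2) : E2 := EuclideanSpace.single i (1 : ℝ)

def pt2 (a b : ℝ) : E2 := (WithLp.equiv 2 (Fin 2 → ℝ)).symm ![a, b]

/-- Parametrisation of the boundary circle `∂D`. -/
def circ (θ : ℝ) : E2 := pt2 (Real.cos θ) (Real.sin θ)

/-- Unit tangent to the boundary circle `∂D`. -/
def circT (θ : ℝ) : E2 := pt2 (-Real.sin θ) (Real.cos θ)

/-- Oscillation of `h` over the boundary circle. -/
def oscBdry {n : ℕ} (h : E2 → EuclideanSpace ℝ (Fin n)) : ℝ :=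
  ⨆ x : Metric.sphere (0 : E2) 1, ⨆ y : Metric.sphere (0 : E2) 1, ‖h x - h y‖

/-!
For a harmonic map `u` of a disc of radius `R` about `c`, the Hopf differential
`Φ = |∂ₓu|² - |∂ᵧu|² - 2i⟨∂ₓu, ∂ᵧu⟩` is holomorphic. On the circle, the real part of `(z - c)² Φ`
is `R²` times the difference of the squares of the normal and of the tangential derivative, and by
the mean value property its integral vanishes: this is (i).

For a constant vector `a`, the field `∇ (‖u - a‖² / 2)` has divergence `|∇u|²`, so the Dirichlet
energy is the boundary integral of `⟨u - a, ∂ᵣu⟩`. If `a` is a boundary value of `u`, then `|u - a|`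
is at most the oscillation, which gives the first inequality of (ii). The second one is
Cauchy–Schwarz combined with (i). The divergence theorem is applied to the polar coordinate
rectangle, where the field need only be continuous up to the boundary.
-/

open scoped InnerProductSpace

section MeanInequality

variable {α E : Type*} [MeasurableSpace α] {μ : Measure α} [NormedAddCommGroup E]

lemma integral_norm_le_sqrt_measureReal_univ_mul_sqrt_integral_norm_sq [IsFiniteMeasure μ]
    {f : α → E} (hf : MemLp f 2 μ) :
    ∫ x, ‖f x‖ ∂μ ≤ √(μ.real Set.univ) * √(∫ x, ‖f x‖ ^ 2 ∂μ) := by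
  have holder := integral_mul_norm_le_Lp_mul_Lq (μ := μ) (f := fun _ ↦ (1 : ℝ)) (g := fun x ↦ ‖f x‖)
    Real.HolderConjugate.two_two (by simp [memLp_const]) (by simpa using hf.norm)
  simpa [Real.sqrt_eq_rpow] using holder

lemma intervalIntegral_norm_le_sqrt_mul_sqrt_intervalIntegral_norm_sq {a b : ℝ} (hab : a ≤ b)
    {f : ℝ → E} (hf : Continuous f) :
    ∫ t in a..b, ‖f t‖ ≤ √(b - a) * √(∫ t in a..b, ‖f t‖ ^ 2) := by
  have hf2 : MemLp f 2 (volume.restrict (Set.Ioc a b)) := by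
    refine (memLp_two_iff_integrable_sq_norm hf.aestronglyMeasurable).2 ?_
    exact ((hf.norm.pow 2).continuousOn.integrableOn_Icc).mono_set Set.Ioc_subset_Icc_self
  simpa [intervalIntegral.integral_of_le hab, hab] using
    integral_norm_le_sqrt_measureReal_univ_mul_sqrt_integral_norm_sq hf2

end MeanInequality

section RealLinearMapsOnComplex

variable {V : Type*} [AddCommGroup V] [Module ℝ V]
  {F : Type*} [NormedAddCommGroup F] [InnerProductSpace ℝ F]

lemma map_eq_re_smul_one_add_im_smul_I (L : ℂ →ₗ[ℝ] V) (w : ℂ) :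
    L w = w.re • L 1 + w.im • L Complex.I := by
  rw [← map_smul, ← map_smul, ← map_add]
  simp

lemma apply_self_add_apply_mul_I_self (B : ℂ →ₗ[ℝ] ℂ →ₗ[ℝ] V) (w : ℂ) :
    B w w + B (w * Complex.I) (w * Complex.I) =
      ‖w‖ ^ 2 • (B 1 1 + B Complex.I Complex.I) := by
  rw [Complex.sq_norm, Complex.normSq_apply, map_eq_re_smul_one_add_im_smul_I B w,
    map_eq_re_smul_one_add_im_smul_I B (w * Complex.I)]
  simp only [LinearMap.add_apply, LinearMap.smul_apply,
    map_eq_re_smul_one_add_im_smul_I (B _) w,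
    map_eq_re_smul_one_add_im_smul_I (B _) (w * Complex.I), Complex.mul_I_re, Complex.mul_I_im]
  module

/-- The energy density `|∂ₓu|² + |∂ᵧu|²` of a map `u` with derivative `L`. -/
def energyDensity (L : ℂ →L[ℝ] F) : ℝ := ‖L 1‖ ^ 2 + ‖L Complex.I‖ ^ 2

lemma continuous_energyDensity : Continuous (energyDensity (F := F)) := by
  unfold energyDensity
  fun_prop

lemma norm_sq_map_add_norm_sq_map_mul_I (L : ℂ →L[ℝ] F) (w : ℂ) :
    ‖L w‖ ^ 2 + ‖L (w * Complex.I)‖ ^ 2 = ‖w‖ ^ 2 * energyDensity L := by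
  simpa [energyDensity, real_inner_self_eq_norm_sq] using
    apply_self_add_apply_mul_I_self ((innerₗ F).compl₁₂ L.toLinearMap L.toLinearMap) w

/-- The Hopf differential `|∂ₓu|² - |∂ᵧu|² - 2i⟨∂ₓu, ∂ᵧu⟩` of a map `u` with derivative `L`. It is
a function of `L` rather than of `u`, so that it makes sense for one-sided derivatives too. -/
def hopfDifferential (L : ℂ →L[ℝ] F) : ℂ :=
  ((‖L 1‖ ^ 2 - ‖L Complex.I‖ ^ 2 : ℝ) : ℂ) - 2 * (⟪L 1, L Complex.I⟫_ℝ : ℂ) * Complex.I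

lemma continuous_hopfDifferential : Continuous (hopfDifferential (F := F)) := by
  unfold hopfDifferential
  fun_prop

lemma re_sq_mul_hopfDifferential (L : ℂ →L[ℝ] F) (w : ℂ) :
    (w ^ 2 * hopfDifferential L).re = ‖L w‖ ^ 2 - ‖L (w * Complex.I)‖ ^ 2 := by
  have hL (z : ℂ) : L z = z.re • L 1 + z.im • L Complex.I :=
    map_eq_re_smul_one_add_im_smul_I L.toLinearMap z
  rw [hL w, hL (w * Complex.I), norm_add_sq_real, norm_add_sq_real]
  simp only [norm_smul, mul_pow, norm_eq_abs, sq_abs, real_inner_smul_left,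
    real_inner_smul_right, Complex.mul_I_re, Complex.mul_I_im]
  simp [hopfDifferential, pow_two]
  ring

end RealLinearMapsOnComplex

lemma isBounded_image_sphere {X Y : Type*} [PseudoMetricSpace X] [ProperSpace X]
    [PseudoMetricSpace Y] {f : X → Y} {c : X} {R : ℝ} (hf : ContinuousOn f (closedBall c R)) :
    Bornology.IsBounded (f '' sphere c R) :=
  ((isCompact_sphere c R).image_of_continuousOn (hf.mono sphere_subset_closedBall)).isBounded

section Derivatives

variable {E F : Type*} [NormedAddCommGroup E] [NormedSpace ℝ E]
  [NormedAddCommGroup F] [NormedSpace ℝ F]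

lemma differentiableAt_fderiv_of_contDiffAt_two {f : E → F} {x : E} (hf : ContDiffAt ℝ 2 f x) :
    DifferentiableAt ℝ (fderiv ℝ f) x :=
  (hf.fderiv_right (m := 1) le_rfl).differentiableAt one_ne_zero

lemma fderivWithin_closedBall_eq_fderiv {u : E → F} {c x : E} {R : ℝ} (hx : x ∈ ball c R) :
    fderivWithin ℝ u (closedBall c R) x = fderiv ℝ u x :=
  fderivWithin_of_mem_nhds (closedBall_mem_nhds_of_mem hx)

lemma uniqueDiffOn_closedBall_of_pos (c : E) {R : ℝ} (hR : 0 < R) :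
    UniqueDiffOn ℝ (closedBall c R) :=
  uniqueDiffOn_convex (convex_closedBall c R)
    ((nonempty_ball.2 hR).mono ball_subset_interior_closedBall)

lemma continuousOn_fderivWithin_closedBall {u : E → F} {c : E} {R : ℝ} (hR : 0 < R)
    (hu : ContDiffOn ℝ 1 u (closedBall c R)) :
    ContinuousOn (fderivWithin ℝ u (closedBall c R)) (closedBall c R) :=
  hu.continuousOn_fderivWithin (uniqueDiffOn_closedBall_of_pos c hR) le_rfl

lemma hasFDerivAt_fderivWithin_closedBall {u : E → F} {c x : E} {R : ℝ} (hx : x ∈ ball c R)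
    (hu : ContDiffAt ℝ 2 u x) :
    HasFDerivAt (fderivWithin ℝ u (closedBall c R)) (fderiv ℝ (fderiv ℝ u) x) x := by
  refine (differentiableAt_fderiv_of_contDiffAt_two hu).hasFDerivAt.congr_of_eventuallyEq ?_
  filter_upwards [isOpen_ball.mem_nhds hx] with y hy
  exact fderivWithin_closedBall_eq_fderiv hy

end Derivatives

section Laplacian

open InnerProductSpace

variable {E E' F : Type*} [NormedAddCommGroup E] [InnerProductSpace ℝ E] [FiniteDimensional ℝ E]
  [NormedAddCommGroup E'] [InnerProductSpace ℝ E'] [FiniteDimensional ℝ E']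
  [NormedAddCommGroup F] [NormedSpace ℝ F]

lemma laplacian_comp_linearIsometryEquiv (f : E' → F) (e : E ≃ₗᵢ[ℝ] E') :
    Laplacian.laplacian (f ∘ e) = Laplacian.laplacian f ∘ e := by
  let b := stdOrthonormalBasis ℝ E
  rw [laplacian_eq_iteratedFDeriv_orthonormalBasis _ b,
    laplacian_eq_iteratedFDeriv_orthonormalBasis _ (b.map e)]
  ext x
  refine Finset.sum_congr rfl fun i _ ↦ ?_
  have chain := e.toContinuousLinearEquiv.iteratedFDerivWithin_comp_right f uniqueDiffOn_univ
    (Set.mem_univ (e x)) 2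
  rw [Set.preimage_univ, iteratedFDerivWithin_univ, iteratedFDerivWithin_univ] at chain
  refine congr($chain ![b i, b i]).trans ?_
  simp [iteratedFDeriv_two_apply]

lemma harmonicAt_comp_linearIsometryEquiv {f : E' → F} {e : E ≃ₗᵢ[ℝ] E'} {x : E}
    (hf : HarmonicAt f (e x)) : HarmonicAt (f ∘ e) x := by
  refine ⟨hf.1.comp x e.contDiff.contDiffAt, ?_⟩
  rw [laplacian_comp_linearIsometryEquiv]
  exact e.continuous.continuousAt.eventually hf.2

lemma laplacian_eq_sum_fderiv_fderiv {ι : Type*} [Fintype ι] (b : OrthonormalBasis ι ℝ E)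
    {f : E → F} {x : E} (hf : ContDiffAt ℝ 2 f x) :
    Laplacian.laplacian f x = ∑ i, fderiv ℝ (fun y ↦ fderiv ℝ f y (b i)) x (b i) := by
  rw [laplacian_eq_iteratedFDeriv_orthonormalBasis f b]
  refine Finset.sum_congr rfl fun i _ ↦ ?_
  rw [fderiv_clm_apply (differentiableAt_fderiv_of_contDiffAt_two hf)
    (differentiableAt_const _)]
  simp [iteratedFDeriv_two_apply]

lemma harmonicOnNhd_of_sum_fderiv_fderiv_eq_zero {ι : Type*} [Fintype ι]
    (b : OrthonormalBasis ι ℝ E) {f : E → F} {s : Set E} (hs : IsOpen s) (hf : ContDiffOn ℝ 2 f s)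
    (hzero : ∀ x ∈ s, ∑ i, fderiv ℝ (fun y ↦ fderiv ℝ f y (b i)) x (b i) = 0) :
    HarmonicOnNhd f s := by
  intro x hx
  refine ⟨hf.contDiffAt (hs.mem_nhds hx), ?_⟩
  filter_upwards [hs.mem_nhds hx] with y hy
  rw [laplacian_eq_sum_fderiv_fderiv b (hf.contDiffAt (hs.mem_nhds hy)), hzero y hy, Pi.zero_apply]

end Laplacian

section Harmonic

variable {F : Type*} [NormedAddCommGroup F] [InnerProductSpace ℝ F] {u : ℂ → F} {z : ℂ}

lemma fderiv_fderiv_add_fderiv_fderiv_I_eq_zero (hu : InnerProductSpace.HarmonicAt u z) :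
    fderiv ℝ (fderiv ℝ u) z 1 1 + fderiv ℝ (fderiv ℝ u) z Complex.I Complex.I = 0 := by
  simpa [InnerProductSpace.laplacian_eq_iteratedFDeriv_complexPlane, iteratedFDeriv_two_apply]
    using hu.2.eq_of_nhds

lemma differentiableAt_hopfDifferential_fderiv (hu : InnerProductSpace.HarmonicAt u z) :
    DifferentiableAt ℂ (fun w ↦ hopfDifferential (fderiv ℝ u w)) z := by
  have hD := (differentiableAt_fderiv_of_contDiffAt_two hu.1).hasFDerivAt
  have hp := hD.clm_apply (hasFDerivAt_const (1 : ℂ) z)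
  have hq := hD.clm_apply (hasFDerivAt_const Complex.I z)
  have hΦ := (Complex.ofRealCLM.hasFDerivAt.comp z (hp.norm_sq.sub hq.norm_sq)).sub
    (((Complex.ofRealCLM.hasFDerivAt.comp z (hp.inner ℝ hq)).const_mul 2).mul_const Complex.I)
  have laplace := eq_neg_of_add_eq_zero_left (fderiv_fderiv_add_fderiv_fderiv_I_eq_zero hu)
  have symm : fderiv ℝ (fderiv ℝ u) z Complex.I 1 = fderiv ℝ (fderiv ℝ u) z 1 Complex.I :=
    hu.1.isSymmSndFDerivAt (by simp) _ _
  have hΦ' : HasFDerivAt (fun w ↦ hopfDifferential (fderiv ℝ u w)) _ z := hΦ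
  refine differentiableAt_complex_iff_differentiableAt_real.2 ⟨hΦ'.differentiableAt, ?_⟩
  rw [hΦ'.fderiv]
  apply Complex.ext <;> simp [laplace, symm, real_inner_comm] <;> ring

end Harmonic

section CircleIntegrals

variable {E : Type*} [NormedAddCommGroup E] [NormedSpace ℝ E]

lemma intervalIntegral_re_circleMap_eq {f : ℂ → ℂ} {c : ℂ} {R : ℝ}
    (hf : DiffContOnCl ℂ f (ball c |R|)) (hfc : CircleIntegrable f c R) :
    ∫ θ in (0 : ℝ)..(2 * π), (f (circleMap c R θ)).re = 2 * π * (f c).re := by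
  have mean := hf.circleAverage
  rw [Real.circleAverage_def, inv_smul_eq_iff₀ two_pi_pos.ne'] at mean
  calc ∫ θ in (0 : ℝ)..(2 * π), (f (circleMap c R θ)).re
      = (∫ θ in (0 : ℝ)..(2 * π), f (circleMap c R θ)).re :=
        Complex.reCLM.intervalIntegral_comp_comm hfc
    _ = 2 * π * (f c).re := by rw [mean]; simp

lemma Icc_prod_ae_eq_Ioo_prod_Ioo (a b a' b' : ℝ) :
    (Set.Icc (a, a') (b, b') : Set (ℝ × ℝ)) =ᵐ[volume] Set.Ioo a b ×ˢ Set.Ioo a' b' := by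
  rw [← Set.Icc_prod_Icc]
  exact Measure.set_prod_ae_eq Ioo_ae_eq_Icc.symm Ioo_ae_eq_Icc.symm

lemma circleMap_mem_ball_iff {c : ℂ} {r R θ : ℝ} (hr : 0 ≤ r) :
    circleMap c r θ ∈ ball c R ↔ r < R := by
  rw [mem_ball_iff_norm, circleMap_sub_center, norm_circleMap_zero, abs_of_nonneg hr]

lemma add_polarCoord_symm_eq_circleMap (c : ℂ) (x : ℝ × ℝ) :
    c + Complex.polarCoord.symm x = circleMap c x.1 x.2 := by
  simp [circleMap, Complex.exp_mul_I]

lemma setIntegral_ball_eq_setIntegral_circleMap (f : ℂ → E) (c : ℂ) (R : ℝ) :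
    ∫ z in ball c R, f z =
      ∫ x in Set.Icc (0, -π) (R, π), x.1 • f (circleMap c x.1 x.2) := by
  calc ∫ z in ball c R, f z
      = ∫ z, (ball c R).indicator f z := (integral_indicator measurableSet_ball).symm
    _ = ∫ z, (ball c R).indicator f (c + z) := (integral_add_left_eq_self _ c).symm
    _ = ∫ x in polarCoord.target, x.1 • (ball c R).indicator f (circleMap c x.1 x.2) := by
        rw [← Complex.integral_comp_polarCoord_symm]
        simp only [add_polarCoord_symm_eq_circleMap]
    _ = ∫ x in polarCoord.target, (Set.Ioo 0 R ×ˢ Set.Ioo (-π) π).indicator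
          (fun x : ℝ × ℝ ↦ x.1 • f (circleMap c x.1 x.2)) x := by
        refine setIntegral_congr_fun polarCoord.open_target.measurableSet fun x hx ↦ ?_
        obtain ⟨hr : 0 < x.1, hθ : x.2 ∈ Set.Ioo (-π) π⟩ := hx
        have h_mem : x ∈ Set.Ioo 0 R ×ˢ Set.Ioo (-π) π ↔ x.1 < R := by
          simp [Set.mem_prod, hr, hθ.1, hθ.2]
        have h_ball : circleMap c x.1 x.2 ∈ ball c R ↔ x.1 < R := circleMap_mem_ball_iff hr.le
        by_cases hR : x.1 < R
        · rw [Set.indicator_of_mem (h_mem.2 hR), Set.indicator_of_mem (h_ball.2 hR)]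
        · rw [Set.indicator_of_notMem (mt h_mem.1 hR), Set.indicator_of_notMem (mt h_ball.1 hR),
            smul_zero]
    _ = ∫ x in Set.Ioo 0 R ×ˢ Set.Ioo (-π) π, x.1 • f (circleMap c x.1 x.2) := by
        rw [setIntegral_indicator (measurableSet_Ioo.prod measurableSet_Ioo),
          Set.inter_eq_right.2]
        exact Set.prod_mono Set.Ioo_subset_Ioi_self subset_rfl
    _ = ∫ x in Set.Icc (0, -π) (R, π), x.1 • f (circleMap c x.1 x.2) :=
        setIntegral_congr_set (Icc_prod_ae_eq_Ioo_prod_Ioo _ _ _ _).symm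

end CircleIntegrals

section Disc

variable {F : Type*} [NormedAddCommGroup F] [InnerProductSpace ℝ F]
  {u : ℂ → F} {c : ℂ} {R : ℝ}

lemma continuous_fderivWithin_circleMap (hR : 0 < R) (hu : ContDiffOn ℝ 1 u (closedBall c R)) :
    Continuous fun θ ↦ fderivWithin ℝ u (closedBall c R) (circleMap c R θ) :=
  (continuousOn_fderivWithin_closedBall hR hu).comp_continuous (continuous_circleMap c R)
    fun θ ↦ circleMap_mem_closedBall c hR.le θ

lemma diffContOnCl_sq_mul_hopfDifferential (hR : 0 < R)
    (hu : ContDiffOn ℝ 1 u (closedBall c R))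
    (hharm : InnerProductSpace.HarmonicOnNhd u (ball c R)) :
    DiffContOnCl ℂ
      (fun z ↦ (z - c) ^ 2 * hopfDifferential (fderivWithin ℝ u (closedBall c R) z))
      (ball c R) := by
  refine ((differentiable_id.sub_const c).pow 2).diffContOnCl.smul ⟨?_, ?_⟩
  · exact DifferentiableOn.congr
      (fun z hz ↦ (differentiableAt_hopfDifferential_fderiv (hharm z hz)).differentiableWithinAt)
      (fun z hz ↦ by rw [fderivWithin_closedBall_eq_fderiv hz])
  · rw [closure_ball c hR.ne']
    exact continuous_hopfDifferential.comp_continuousOn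
      (continuousOn_fderivWithin_closedBall hR hu)

theorem integral_norm_sq_radial_eq_tangential (hR : 0 < R)
    (hu : ContDiffOn ℝ 1 u (closedBall c R))
    (hharm : InnerProductSpace.HarmonicOnNhd u (ball c R)) :
    ∫ θ in (0 : ℝ)..(2 * π),
        ‖fderivWithin ℝ u (closedBall c R) (circleMap c R θ) (circleMap 0 R θ)‖ ^ 2 =
      ∫ θ in (0 : ℝ)..(2 * π),
        ‖fderivWithin ℝ u (closedBall c R) (circleMap c R θ)
          (circleMap 0 R θ * Complex.I)‖ ^ 2 := by
  have hΦ := diffContOnCl_sq_mul_hopfDifferential hR hu hharm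
  have cont_D := continuous_fderivWithin_circleMap hR hu
  have cont_sq {v : ℝ → ℂ} (hv : Continuous v) : Continuous fun θ ↦
      ‖fderivWithin ℝ u (closedBall c R) (circleMap c R θ) (v θ)‖ ^ 2 :=
    (cont_D.clm_apply hv).norm.pow 2
  have mean := intervalIntegral_re_circleMap_eq ((abs_of_pos hR).symm ▸ hΦ)
    ((hΦ.continuousOn.mono (closure_ball c hR.ne' ▸ sphere_subset_closedBall)).circleIntegrable
      hR.le)
  simp only [circleMap_sub_center, re_sq_mul_hopfDifferential, sub_self, ne_eq,
    OfNat.ofNat_ne_zero, not_false_eq_true, zero_pow, zero_mul, Complex.zero_re, mul_zero] at mean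
  rwa [intervalIntegral.integral_sub ((cont_sq (continuous_circleMap 0 R)).intervalIntegrable _ _)
    ((cont_sq ((continuous_circleMap 0 R).mul_const _)).intervalIntegrable _ _),
    sub_eq_zero] at mean

/-- In polar coordinates `x = (r, θ)` about `c`, the component along `v` of the vector field
`∇ (‖u - a‖² / 2)`, with one-sided derivatives of `u` on the circle of radius `R`. -/
def polarFlux (u : ℂ → F) (c : ℂ) (R : ℝ) (a : F) (v : ℝ × ℝ → ℂ) (x : ℝ × ℝ) : ℝ :=
  ⟪u (circleMap c x.1 x.2) - a,
    fderivWithin ℝ u (closedBall c R) (circleMap c x.1 x.2) (v x)⟫_ℝ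

/-- The differential of the polar parametrisation `(r, θ) ↦ c + r * exp (θ * I)`. -/
def polarDeriv (x : ℝ × ℝ) : ℝ × ℝ →L[ℝ] ℂ :=
  (ContinuousLinearMap.fst ℝ ℝ ℝ).smulRight (circleMap 0 1 x.2) +
    (ContinuousLinearMap.snd ℝ ℝ ℝ).smulRight (circleMap 0 x.1 x.2 * Complex.I)

lemma polarDeriv_one_zero (x : ℝ × ℝ) : polarDeriv x (1, 0) = circleMap 0 1 x.2 := by
  simp [polarDeriv]

lemma polarDeriv_zero_one (x : ℝ × ℝ) :
    polarDeriv x (0, 1) = circleMap 0 x.1 x.2 * Complex.I := by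
  simp [polarDeriv]

lemma hasFDerivAt_circleMap_one (x : ℝ × ℝ) :
    HasFDerivAt (fun x : ℝ × ℝ ↦ circleMap 0 1 x.2)
      ((ContinuousLinearMap.snd ℝ ℝ ℝ).smulRight (circleMap 0 1 x.2 * Complex.I)) x := by
  have h : HasFDerivAt (fun x : ℝ × ℝ ↦ circleMap 0 1 x.2) _ x :=
    (hasDerivAt_circleMap 0 1 x.2).hasFDerivAt.comp x hasFDerivAt_snd
  refine h.congr_fderiv ?_
  ext <;> simp

lemma hasFDerivAt_circleMap_one_mul_I (x : ℝ × ℝ) :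
    HasFDerivAt (fun x : ℝ × ℝ ↦ circleMap 0 1 x.2 * Complex.I)
      ((ContinuousLinearMap.snd ℝ ℝ ℝ).smulRight (-circleMap 0 1 x.2)) x := by
  refine ((hasFDerivAt_circleMap_one x).mul_const Complex.I).congr_fderiv ?_
  ext <;> simp [mul_comm, ← mul_assoc]

lemma hasFDerivAt_circleMap_polar (c : ℂ) (x : ℝ × ℝ) :
    HasFDerivAt (fun x : ℝ × ℝ ↦ circleMap c x.1 x.2) (polarDeriv x) x := by
  have h := (hasFDerivAt_fst.smul (hasFDerivAt_circleMap_one x)).const_add c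
  refine (h.congr_fderiv ?_).congr_of_eventuallyEq (.of_forall fun y ↦ ?_)
  · ext <;> simp [polarDeriv, circleMap, mul_assoc]
  · simp [circleMap]

lemma hasFDerivAt_polarFlux {v : ℝ × ℝ → ℂ} {v' : ℝ × ℝ →L[ℝ] ℂ} {x : ℝ × ℝ} {z : ℂ} (a : F)
    (hxz : circleMap c x.1 x.2 = z) (hz : z ∈ ball c R) (hu : ContDiffAt ℝ 2 u z)
    (hv : HasFDerivAt v v' x) :
    HasFDerivAt (polarFlux u c R a v)
      (innerSL ℝ (u z - a) ∘L
          (fderiv ℝ u z ∘L v' + (fderiv ℝ (fderiv ℝ u) z ∘L polarDeriv x).flip (v x)) +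
        innerSL ℝ (fderiv ℝ u z (v x)) ∘L fderiv ℝ u z ∘L polarDeriv x) x := by
  subst hxz
  have polar := hasFDerivAt_circleMap_polar c x
  have h : HasFDerivAt (polarFlux u c R a v) _ x :=
    (((hu.differentiableAt two_ne_zero).hasFDerivAt.comp x polar).sub_const a).inner ℝ
      (((hasFDerivAt_fderivWithin_closedBall hz hu).comp x polar).clm_apply hv)
  refine h.congr_fderiv ?_
  ext <;> simp [fderivWithin_closedBall_eq_fderiv hz, inner_sub_left, inner_add_right,
    real_inner_comm]

lemma fderiv_polarFlux_apply {v : ℝ × ℝ → ℂ} {v' : ℝ × ℝ →L[ℝ] ℂ} {x : ℝ × ℝ} {z : ℂ} (a : F)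
    (hxz : circleMap c x.1 x.2 = z) (hz : z ∈ ball c R) (hu : ContDiffAt ℝ 2 u z)
    (hv : HasFDerivAt v v' x) (w : ℝ × ℝ) :
    fderiv ℝ (polarFlux u c R a v) x w =
      ⟪u z - a, fderiv ℝ u z (v' w) + fderiv ℝ (fderiv ℝ u) z (polarDeriv x w) (v x)⟫_ℝ +
        ⟪fderiv ℝ u z (v x), fderiv ℝ u z (polarDeriv x w)⟫_ℝ := by
  rw [(hasFDerivAt_polarFlux a hxz hz hu hv).fderiv]
  rfl

/-- The radial component of `∇ (‖u - a‖² / 2)`, weighted by the Jacobian factor `r`. -/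
def radialFlux (u : ℂ → F) (c : ℂ) (R : ℝ) (a : F) : ℝ × ℝ → ℝ :=
  polarFlux u c R a fun x ↦ circleMap 0 x.1 x.2

/-- The angular component of `∇ (‖u - a‖² / 2)`. Together with `radialFlux` it is the field to which
the divergence theorem is applied on rectangles of polar coordinates. -/
def angularFlux (u : ℂ → F) (c : ℂ) (R : ℝ) (a : F) : ℝ × ℝ → ℝ :=
  polarFlux u c R a fun x ↦ circleMap 0 1 x.2 * Complex.I

lemma differentiableAt_radialFlux {x : ℝ × ℝ} (a : F)
    (hx : circleMap c x.1 x.2 ∈ ball c R) (hu : ContDiffAt ℝ 2 u (circleMap c x.1 x.2)) :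
    DifferentiableAt ℝ (radialFlux u c R a) x :=
  (hasFDerivAt_polarFlux a rfl hx hu
    (hasFDerivAt_circleMap_polar 0 x)).differentiableAt

lemma differentiableAt_angularFlux {x : ℝ × ℝ} (a : F)
    (hx : circleMap c x.1 x.2 ∈ ball c R) (hu : ContDiffAt ℝ 2 u (circleMap c x.1 x.2)) :
    DifferentiableAt ℝ (angularFlux u c R a) x :=
  (hasFDerivAt_polarFlux a rfl hx hu
    (hasFDerivAt_circleMap_one_mul_I x)).differentiableAt

lemma fderiv_radialFlux_add_fderiv_angularFlux {x : ℝ × ℝ} {z : ℂ} (a : F)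
    (hxz : circleMap c x.1 x.2 = z) (hz : z ∈ ball c R) (hu : InnerProductSpace.HarmonicAt u z) :
    fderiv ℝ (radialFlux u c R a) x (1, 0) + fderiv ℝ (angularFlux u c R a) x (0, 1) =
      x.1 * energyDensity (fderiv ℝ u z) := by
  set e := circleMap 0 1 x.2
  set p := u z - a
  set L := fderiv ℝ u z
  set B := fderiv ℝ (fderiv ℝ u) z
  have polar : circleMap 0 x.1 x.2 = x.1 • e := by simp [e, circleMap]
  have radial : fderiv ℝ (radialFlux u c R a) x (1, 0) =
      ⟪p, L e⟫_ℝ + x.1 * (⟪p, B e e⟫_ℝ + ‖L e‖ ^ 2) := by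
    rw [radialFlux, fderiv_polarFlux_apply a hxz hz hu.1 (hasFDerivAt_circleMap_polar 0 x),
      polarDeriv_one_zero, polar]
    simp only [map_smul, inner_add_right, real_inner_smul_left, real_inner_smul_right,
      real_inner_self_eq_norm_sq, L, B, p, e]
    ring
  have angular : fderiv ℝ (angularFlux u c R a) x (0, 1) =
      -⟪p, L e⟫_ℝ + x.1 * (⟪p, B (e * Complex.I) (e * Complex.I)⟫_ℝ + ‖L (e * Complex.I)‖ ^ 2) := by
    rw [angularFlux, fderiv_polarFlux_apply a hxz hz hu.1
      (hasFDerivAt_circleMap_one_mul_I x), polarDeriv_zero_one, polar]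
    simp only [ContinuousLinearMap.smulRight_apply, ContinuousLinearMap.coe_snd', one_smul,
      map_neg, inner_neg_right, smul_mul_assoc, map_smul, smul_apply, inner_add_right,
      real_inner_smul_right, real_inner_self_eq_norm_sq, L, B, p, e]
    ring
  have energy : ‖L e‖ ^ 2 + ‖L (e * Complex.I)‖ ^ 2 = energyDensity L := by
    simpa [e] using norm_sq_map_add_norm_sq_map_mul_I L e
  have laplace : B e e + B (e * Complex.I) (e * Complex.I) = 0 := by
    simpa [B, e, fderiv_fderiv_add_fderiv_fderiv_I_eq_zero hu] using
      apply_self_add_apply_mul_I_self B.toLinearMap₁₂ e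
  have hB : ⟪p, B e e⟫_ℝ + ⟪p, B (e * Complex.I) (e * Complex.I)⟫_ℝ = 0 := by
    rw [← inner_add_right, laplace, inner_zero_right]
  rw [radial, angular]
  linear_combination x.1 * energy + x.1 * hB

lemma continuousOn_comp_circleMap_polar {X : Type*} [TopologicalSpace X] {f : ℂ → X}
    (hf : ContinuousOn f (closedBall c R)) (α β : ℝ) :
    ContinuousOn (fun x : ℝ × ℝ ↦ f (circleMap c x.1 x.2)) (Set.Icc (0, α) (R, β)) := by
  refine hf.comp (fun x _ ↦ ?_) fun x hx ↦ ?_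
  · exact (hasFDerivAt_circleMap_polar c x).continuousAt.continuousWithinAt
  · exact closedBall_subset_closedBall hx.2.1 (circleMap_mem_closedBall c hx.1.1 x.2)

lemma continuousOn_polarFlux {v : ℝ × ℝ → ℂ} (hR : 0 < R) (hu : ContDiffOn ℝ 1 u (closedBall c R))
    (a : F) (hv : Continuous v) (α β : ℝ) :
    ContinuousOn (polarFlux u c R a v) (Set.Icc (0, α) (R, β)) :=
  ((continuousOn_comp_circleMap_polar hu.continuousOn α β).sub continuousOn_const).inner
    ((continuousOn_comp_circleMap_polar (continuousOn_fderivWithin_closedBall hR hu) α β).clm_apply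
      hv.continuousOn)

lemma continuous_radialFlux_direction : Continuous fun x : ℝ × ℝ ↦ circleMap 0 x.1 x.2 :=
  continuous_iff_continuousAt.2 fun x ↦ (hasFDerivAt_circleMap_polar 0 x).continuousAt

lemma continuous_angularFlux_direction :
    Continuous fun x : ℝ × ℝ ↦ circleMap 0 1 x.2 * Complex.I :=
  continuous_iff_continuousAt.2 fun x ↦ (hasFDerivAt_circleMap_one_mul_I x).continuousAt

lemma integrableOn_mul_energyDensity_circleMap (hR : 0 < R) (hu : ContDiffOn ℝ 1 u (closedBall c R))
    (α β : ℝ) :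
    IntegrableOn (fun x : ℝ × ℝ ↦ x.1 * energyDensity (fderiv ℝ u (circleMap c x.1 x.2)))
      (Set.Ioo 0 R ×ˢ Set.Ioo α β) := by
  have cont_D := continuousOn_comp_circleMap_polar (continuousOn_fderivWithin_closedBall hR hu) α β
  have integrable : IntegrableOn (fun x : ℝ × ℝ ↦ x.1 *
      energyDensity (fderivWithin ℝ u (closedBall c R) (circleMap c x.1 x.2)))
      (Set.Icc (0, α) (R, β)) :=
    (continuous_fst.continuousOn.mul
      (continuous_energyDensity.comp_continuousOn cont_D)).integrableOn_compact isCompact_Icc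
  refine (integrable.congr_set_ae (Icc_prod_ae_eq_Ioo_prod_Ioo _ _ _ _).symm).congr_fun
    (fun x hx ↦ ?_) (measurableSet_Ioo.prod measurableSet_Ioo)
  simp only [fderivWithin_closedBall_eq_fderiv ((circleMap_mem_ball_iff hx.1.1.le).2 hx.1.2)]

lemma setIntegral_mul_energyDensity_eq_integral_radialFlux (hR : 0 < R)
    (hu : ContDiffOn ℝ 1 u (closedBall c R))
    (hharm : InnerProductSpace.HarmonicOnNhd u (ball c R)) (a : F) :
    ∫ x in Set.Icc (0, -π) (R, π), x.1 * energyDensity (fderiv ℝ u (circleMap c x.1 x.2)) =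
      ∫ θ in -π..π, radialFlux u c R a (R, θ) := by
  have h_ball {x : ℝ × ℝ} (hx : x ∈ Set.Ioo 0 R ×ˢ Set.Ioo (-π) π) :
      circleMap c x.1 x.2 ∈ ball c R := (circleMap_mem_ball_iff hx.1.1.le).2 hx.1.2
  have h_div : Set.EqOn (fun x : ℝ × ℝ ↦ x.1 * energyDensity (fderiv ℝ u (circleMap c x.1 x.2)))
      (fun x ↦ fderiv ℝ (radialFlux u c R a) x (1, 0) + fderiv ℝ (angularFlux u c R a) x (0, 1))
      (Set.Ioo 0 R ×ˢ Set.Ioo (-π) π) := fun x hx ↦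
    (fderiv_radialFlux_add_fderiv_angularFlux a rfl (h_ball hx) (hharm _ (h_ball hx))).symm
  have h_box := Icc_prod_ae_eq_Ioo_prod_Ioo 0 R (-π) π
  have h_meas : MeasurableSet (Set.Ioo 0 R ×ˢ Set.Ioo (-π) π) :=
    measurableSet_Ioo.prod measurableSet_Ioo
  have divergence := integral_divergence_prod_Icc_of_hasFDerivAt_off_countable_of_le
    (radialFlux u c R a) (angularFlux u c R a) (fderiv ℝ (radialFlux u c R a))
    (fderiv ℝ (angularFlux u c R a)) (0, -π) (R, π) ⟨hR.le, (neg_lt_self pi_pos).le⟩ ∅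
    Set.countable_empty (continuousOn_polarFlux hR hu a continuous_radialFlux_direction _ _)
    (continuousOn_polarFlux hR hu a continuous_angularFlux_direction _ _)
    (fun x hx ↦
      (differentiableAt_radialFlux a (h_ball hx.1) (hharm _ (h_ball hx.1)).1).hasFDerivAt)
    (fun x hx ↦
      (differentiableAt_angularFlux a (h_ball hx.1) (hharm _ (h_ball hx.1)).1).hasFDerivAt)
    (((integrableOn_mul_energyDensity_circleMap hR hu _ _).congr_fun h_div h_meas).congr_set_ae
      h_box)
  have periodic (r : ℝ) : angularFlux u c R a (r, π) = angularFlux u c R a (r, -π) := by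
    have h (c' : ℂ) (r' : ℝ) : circleMap c' r' π = circleMap c' r' (-π) := by
      simpa [two_mul] using (periodic_circleMap c' r' (-π))
    simp only [angularFlux, polarFlux, h]
  have center (θ : ℝ) : radialFlux u c R a (0, θ) = 0 := by simp [radialFlux, polarFlux]
  rw [setIntegral_congr_set h_box, setIntegral_congr_fun h_meas h_div,
    ← setIntegral_congr_set h_box, divergence]
  simp only [periodic, center, sub_self, zero_add, intervalIntegral.integral_zero, sub_zero]

theorem setIntegral_energyDensity_eq_intervalIntegral_inner (hR : 0 < R)
    (hu : ContDiffOn ℝ 1 u (closedBall c R))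
    (hharm : InnerProductSpace.HarmonicOnNhd u (ball c R)) (a : F) :
    ∫ z in ball c R, energyDensity (fderiv ℝ u z) =
      ∫ θ in (0 : ℝ)..(2 * π), ⟪u (circleMap c R θ) - a,
        fderivWithin ℝ u (closedBall c R) (circleMap c R θ) (circleMap 0 R θ)⟫_ℝ := by
  have periodic : Function.Periodic (fun θ ↦ radialFlux u c R a (R, θ)) (2 * π) := fun θ ↦ by
    simp only [radialFlux, polarFlux, periodic_circleMap _ _ θ]
  have shift := periodic.intervalIntegral_add_eq (-π) 0
  rw [show -π + 2 * π = π by ring, zero_add] at shift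
  rw [setIntegral_ball_eq_setIntegral_circleMap]
  exact (setIntegral_mul_energyDensity_eq_integral_radialFlux hR hu hharm a).trans shift

theorem setIntegral_energyDensity_le_diam_mul_intervalIntegral_norm (hR : 0 < R)
    (hu : ContDiffOn ℝ 1 u (closedBall c R))
    (hharm : InnerProductSpace.HarmonicOnNhd u (ball c R)) :
    ∫ z in ball c R, energyDensity (fderiv ℝ u z) ≤
      diam (u '' sphere c R) * ∫ θ in (0 : ℝ)..(2 * π),
        ‖fderivWithin ℝ u (closedBall c R) (circleMap c R θ) (circleMap 0 R θ)‖ := by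
  have mem (θ : ℝ) : u (circleMap c R θ) ∈ u '' sphere c R :=
    Set.mem_image_of_mem u (circleMap_mem_sphere c hR.le θ)
  have cont_Du : Continuous fun θ ↦
      fderivWithin ℝ u (closedBall c R) (circleMap c R θ) (circleMap 0 R θ) :=
    (continuous_fderivWithin_circleMap hR hu).clm_apply (continuous_circleMap 0 R)
  have cont_u : Continuous fun θ ↦ u (circleMap c R θ) - u (circleMap c R 0) :=
    (hu.continuousOn.comp_continuous (continuous_circleMap c R)
      fun θ ↦ circleMap_mem_closedBall c hR.le θ).sub continuous_const
  rw [setIntegral_energyDensity_eq_intervalIntegral_inner hR hu hharm (u (circleMap c R 0)),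
    ← intervalIntegral.integral_const_mul]
  refine intervalIntegral.integral_mono_on two_pi_pos.le
    ((cont_u.inner cont_Du).intervalIntegrable _ _)
    ((cont_Du.norm.const_mul _).intervalIntegrable _ _) fun θ _ ↦ ?_
  refine (real_inner_le_norm _ _).trans (mul_le_mul_of_nonneg_right ?_ (norm_nonneg _))
  rw [← dist_eq_norm]
  exact dist_le_diam_of_mem (isBounded_image_sphere hu.continuousOn) (mem θ) (mem 0)

end Disc

section EuclideanPlane

/-- The identification of the complex plane with the Euclidean plane. -/
def complexEquivE2 : ℂ ≃ₗᵢ[ℝ] E2 := Complex.orthonormalBasisOneI.repr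

lemma complexEquivE2_apply (z : ℂ) : complexEquivE2 z = pt2 z.re z.im := by
  ext i
  fin_cases i <;> simp [complexEquivE2, pt2]

lemma complexEquivE2_one : complexEquivE2 1 = e2 0 := by
  ext i
  fin_cases i <;> simp [complexEquivE2_apply, pt2, e2]

lemma complexEquivE2_I : complexEquivE2 Complex.I = e2 1 := by
  ext i
  fin_cases i <;> simp [complexEquivE2_apply, pt2, e2]

lemma complexEquivE2_circleMap (θ : ℝ) : complexEquivE2 (circleMap 0 1 θ) = circ θ := by
  simp [complexEquivE2_apply, circ, circleMap, Complex.exp_re, Complex.exp_im]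

lemma complexEquivE2_circleMap_mul_I (θ : ℝ) :
    complexEquivE2 (circleMap 0 1 θ * Complex.I) = circT θ := by
  simp [complexEquivE2_apply, circT, circleMap, Complex.exp_re, Complex.exp_im]

lemma image_comp_complexEquivE2_sphere {Y : Type*} (h : E2 → Y) :
    (h ∘ complexEquivE2) '' sphere 0 1 = h '' sphere 0 1 := by
  rw [Set.image_comp, LinearIsometryEquiv.image_sphere, map_zero]

variable {F : Type*} [NormedAddCommGroup F] [NormedSpace ℝ F] {h : E2 → F}

lemma fderivWithin_comp_complexEquivE2 (θ : ℝ) (w : ℂ) :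
    fderivWithin ℝ (h ∘ complexEquivE2) (closedBall 0 1) (circleMap 0 1 θ) w =
      fderivWithin ℝ h (closedBall 0 1) (circ θ) (complexEquivE2 w) := by
  have unique : UniqueDiffOn ℝ (closedBall (0 : ℂ) 1) := uniqueDiffOn_closedBall_of_pos 0 one_pos
  have chain := complexEquivE2.toContinuousLinearEquiv.comp_right_fderivWithin (f := h)
    (s := closedBall 0 1) (x := circleMap 0 1 θ)
  simp only [LinearIsometryEquiv.coe_toContinuousLinearEquiv,
    LinearIsometryEquiv.preimage_closedBall, map_zero, complexEquivE2_circleMap] at chain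
  exact congr($(chain (unique _ (circleMap_mem_closedBall 0 zero_le_one θ))) w)

lemma fderiv_comp_complexEquivE2 (z w : ℂ) :
    fderiv ℝ (h ∘ complexEquivE2) z w = fderiv ℝ h (complexEquivE2 z) (complexEquivE2 w) :=
  congr($(complexEquivE2.toContinuousLinearEquiv.comp_right_fderiv) w)

end EuclideanPlane

section UnitDisc

variable {F : Type*} [NormedAddCommGroup F] [InnerProductSpace ℝ F] {h : E2 → F}

lemma setIntegral_energyDensity_comp_complexEquivE2 :
    ∫ z in ball 0 1, energyDensity (fderiv ℝ (h ∘ complexEquivE2) z) =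
      ∫ x in ball (0 : E2) 1, ∑ i, ‖fderiv ℝ h x (e2 i)‖ ^ 2 := by
  have transfer := complexEquivE2.measurePreserving.setIntegral_preimage_emb
    complexEquivE2.toHomeomorph.measurableEmbedding
    (fun x ↦ ∑ i, ‖fderiv ℝ h x (e2 i)‖ ^ 2) (ball 0 1)
  rw [complexEquivE2.preimage_ball, map_zero] at transfer
  simpa only [energyDensity, fderiv_comp_complexEquivE2, complexEquivE2_one, complexEquivE2_I,
    Fin.sum_univ_two] using transfer

lemma contDiffOn_comp_complexEquivE2 (hC1 : ContDiffOn ℝ 1 h (closedBall 0 1)) :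
    ContDiffOn ℝ 1 (h ∘ complexEquivE2) (closedBall 0 1) :=
  hC1.comp complexEquivE2.contDiff.contDiffOn fun z hz ↦ by simpa using hz

lemma harmonicOnNhd_comp_complexEquivE2 (hC2 : ContDiffOn ℝ 2 h (ball 0 1))
    (hharm : ∀ x ∈ ball (0 : E2) 1, ∑ i, fderiv ℝ (fun y ↦ fderiv ℝ h y (e2 i)) x (e2 i) = 0) :
    InnerProductSpace.HarmonicOnNhd (h ∘ complexEquivE2) (ball 0 1) := by
  have harmonic := harmonicOnNhd_of_sum_fderiv_fderiv_eq_zero (EuclideanSpace.basisFun (Fin 2) ℝ)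
    isOpen_ball hC2 (by simpa only [EuclideanSpace.basisFun_apply] using! hharm)
  exact fun z hz ↦ harmonicAt_comp_linearIsometryEquiv (harmonic _ (by simpa using hz))

lemma oscBdry_eq_diam {n : ℕ} {h : E2 → EuclideanSpace ℝ (Fin n)}
    (hcont : ContinuousOn h (closedBall 0 1)) : oscBdry h = diam (h '' sphere 0 1) := by
  have bounded := isBounded_image_sphere hcont
  have h_le (x y : sphere (0 : E2) 1) : ‖h x - h y‖ ≤ diam (h '' sphere 0 1) := by
    rw [← dist_eq_norm]
    exact dist_le_diam_of_mem bounded (Set.mem_image_of_mem h x.2) (Set.mem_image_of_mem h y.2)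
  have : Nonempty (sphere (0 : E2) 1) := (NormedSpace.sphere_nonempty.2 zero_le_one).to_subtype
  refine le_antisymm (ciSup_le fun x ↦ ciSup_le (h_le x)) (diam_le_of_forall_dist_le ?_ ?_)
  · exact Real.iSup_nonneg fun x ↦ Real.iSup_nonneg fun y ↦ norm_nonneg _
  · rintro _ ⟨x, hx, rfl⟩ _ ⟨y, hy, rfl⟩
    rw [dist_eq_norm]
    refine (le_ciSup ⟨_, Set.forall_mem_range.2 (h_le ⟨x, hx⟩)⟩ (⟨y, hy⟩ : sphere (0 : E2) 1)).trans
      (le_ciSup (f := fun x : sphere (0 : E2) 1 ↦ ⨆ y : sphere (0 : E2) 1, ‖h x - h y‖)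
        ⟨_, Set.forall_mem_range.2 fun x ↦ ciSup_le (h_le x)⟩ ⟨x, hx⟩)

theorem statement15_general (hC1 : ContDiffOn ℝ 1 h (Metric.closedBall 0 1))
    (hC2 : ContDiffOn ℝ 2 h (Metric.ball 0 1))
    (hharm : ∀ x ∈ Metric.ball (0 : E2) 1,
        (∑ i, fderiv ℝ (fun y => fderiv ℝ h y (e2 i)) x (e2 i)) = 0) :
    (∫ θ in (0 : ℝ)..(2 * π),
        ‖fderivWithin ℝ h (Metric.closedBall 0 1) (circ θ) (circ θ)‖ ^ 2)
      = (∫ θ in (0 : ℝ)..(2 * π),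
          ‖fderivWithin ℝ h (Metric.closedBall 0 1) (circ θ) (circT θ)‖ ^ 2) ∧
    (∫ x in Metric.ball (0 : E2) 1, ∑ i, ‖fderiv ℝ h x (e2 i)‖ ^ 2)
      ≤ diam (h '' sphere 0 1) * ∫ θ in (0 : ℝ)..(2 * π),
          ‖fderivWithin ℝ h (Metric.closedBall 0 1) (circ θ) (circ θ)‖ ∧
    diam (h '' sphere 0 1) * (∫ θ in (0 : ℝ)..(2 * π),
          ‖fderivWithin ℝ h (Metric.closedBall 0 1) (circ θ) (circ θ)‖)
      ≤ √(2 * π) * diam (h '' sphere 0 1) *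
        √(∫ θ in (0 : ℝ)..(2 * π),
          ‖fderivWithin ℝ h (Metric.closedBall 0 1) (circ θ) (circT θ)‖ ^ 2) := by
  have hu := contDiffOn_comp_complexEquivE2 hC1
  have harmonic := harmonicOnNhd_comp_complexEquivE2 hC2 hharm
  have rellich := integral_norm_sq_radial_eq_tangential one_pos hu harmonic
  have energy := setIntegral_energyDensity_le_diam_mul_intervalIntegral_norm one_pos hu harmonic
  have cauchy_schwarz := intervalIntegral_norm_le_sqrt_mul_sqrt_intervalIntegral_norm_sq
    two_pi_pos.le ((continuous_fderivWithin_circleMap one_pos hu).clm_apply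
      (continuous_circleMap 0 1))
  rw [rellich] at cauchy_schwarz
  simp only [setIntegral_energyDensity_comp_complexEquivE2, image_comp_complexEquivE2_sphere,
    fderivWithin_comp_complexEquivE2, complexEquivE2_circleMap, complexEquivE2_circleMap_mul_I,
    sub_zero] at rellich energy cauchy_schwarz
  refine ⟨rellich, energy, ?_⟩
  calc _ ≤ diam (h '' sphere 0 1) * (√(2 * π) * √_) := by gcongr
    _ = _ := by ring

end UnitDisc

/-- for a harmonic map of the unit disc, the boundary integrals of the
squared normal and tangential derivatives agree, and the Dirichlet energy is controlled by
the oscillation and the tangential derivative of the boundary values. -/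
theorem statement15 (n : ℕ) (h : E2 → EuclideanSpace ℝ (Fin n))
    (hcont : ContinuousOn h (Metric.closedBall 0 1))
    (hC1 : ContDiffOn ℝ 1 h (Metric.closedBall 0 1))
    (hC2 : ContDiffOn ℝ 2 h (Metric.ball 0 1))
    (hharm : ∀ x ∈ Metric.ball (0 : E2) 1,
        (∑ i, fderiv ℝ (fun y => fderiv ℝ h y (e2 i)) x (e2 i)) = 0) :
    -- (i)
    (∫ θ in (0 : ℝ)..(2 * π),
        ‖fderivWithin ℝ h (Metric.closedBall 0 1) (circ θ) (circ θ)‖ ^ 2)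
      = (∫ θ in (0 : ℝ)..(2 * π),
          ‖fderivWithin ℝ h (Metric.closedBall 0 1) (circ θ) (circT θ)‖ ^ 2) ∧
    -- (ii), first inequality
    (∫ x in Metric.ball (0 : E2) 1, ∑ i, ‖fderiv ℝ h x (e2 i)‖ ^ 2)
      ≤ oscBdry h * ∫ θ in (0 : ℝ)..(2 * π),
          ‖fderivWithin ℝ h (Metric.closedBall 0 1) (circ θ) (circ θ)‖ ∧
    -- (ii), second inequality
    oscBdry h * (∫ θ in (0 : ℝ)..(2 * π),
          ‖fderivWithin ℝ h (Metric.closedBall 0 1) (circ θ) (circ θ)‖)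
      ≤ Real.sqrt (2 * π) * oscBdry h *
        Real.sqrt (∫ θ in (0 : ℝ)..(2 * π),
          ‖fderivWithin ℝ h (Metric.closedBall 0 1) (circ θ) (circT θ)‖ ^ 2) := by
  simpa only [oscBdry_eq_diam hcont] using statement15_general hC1 hC2 hharm
end
end

section
/- Let π : ℂ → S² ⊂ ℝ³ be the inverse stereographic projection π(x₁+ix₂) = (2x₁/(1+|x|²), 2x₂/(1+|x|²), (1−|x|²)/(1+|x|²)). For every q ∈ ℝ³ and every r ∈ (0,1), the set of points x on the circle {x ∈ ℂ : |x| = r} at which |π(x) − q|_{ℝ³} ≥ |x| holds has one-dimensional (arclength) measure at least πr, i.e. it comprises at least half of the circle. -/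
open MeasureTheory Real

noncomputable section

def pt3 (a b c : ℝ) : E3 := (WithLp.equiv 2 (Fin 3 → ℝ)).symm ![a, b, c]

/-- The inverse stereographic projection `π : ℂ → S² ⊂ ℝ³`. -/
def stereoC (z : ℂ) : E3 :=
  pt3 (2 * z.re / (1 + Complex.normSq z)) (2 * z.im / (1 + Complex.normSq z))
    ((1 - Complex.normSq z) / (1 + Complex.normSq z))

/-!
For `r ≤ 1`, inverse stereographic projection maps the opposite points `z` and `-z` of the circle of
radius `r` to points at distance `4r / (1 + r²) ≥ 2r`. By the triangle inequality no `q` is closer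
than `r` to both images, so the set and its translate by a half-turn together cover the circle.
-/

theorem le_dist_or_le_dist {X : Type*} [PseudoMetricSpace X] {a b : X} {s : ℝ}
    (h : 2 * s ≤ dist a b) (q : X) : s ≤ dist a q ∨ s ≤ dist b q := by
  by_contra! hlt
  linarith [dist_triangle_right a b q]

theorem measure_le_of_mem_or_map_mem {α : Type*} [MeasurableSpace α] {μ : Measure α} {f : α → α}
    (hf : MeasurePreserving f μ μ) {A T : Set α} (hT : MeasurableSet T)
    (hfT : ∀ x ∈ T, f x ∉ T) (hA : ∀ x ∈ T, x ∈ A ∨ f x ∈ A) : μ T ≤ μ A := by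
  have hcover : T ⊆ (A ∩ T) ∪ f ⁻¹' (A \ T) := fun x hx ↦
    (hA x hx).imp (fun hxA ↦ ⟨hxA, hx⟩) (fun hfxA ↦ ⟨hfxA, hfT x hx⟩)
  calc
    μ T ≤ μ (A ∩ T) + μ (f ⁻¹' (A \ T)) := (measure_mono hcover).trans (measure_union_le _ _)
    _ ≤ μ (A ∩ T) + μ (A \ T) := by grw [hf.measure_preimage_le]
    _ = μ A := measure_inter_add_sdiff A hT

theorem dist_stereoC (z w : ℂ) :
    dist (stereoC z) (stereoC w) = 2 * ‖z - w‖ / √((1 + ‖z‖ ^ 2) * (1 + ‖w‖ ^ 2)) := by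
  have hz : 1 + (z.re ^ 2 + z.im ^ 2) ≠ 0 := by positivity
  have hw : 1 + (w.re ^ 2 + w.im ^ 2) ≠ 0 := by positivity
  rw [← sq_eq_sq₀ dist_nonneg (by positivity), div_pow, mul_pow, sq_sqrt (by positivity),
    EuclideanSpace.dist_eq, sq_sqrt (by positivity), Fin.sum_univ_three]
  simp only [stereoC, pt3, WithLp.equiv_symm_apply, Matrix.cons_val, Real.dist_eq, sq_abs,
    Complex.sq_norm, Complex.normSq_apply, Complex.sub_re, Complex.sub_im, ← sq]
  field_simp
  ring

theorem dist_stereoC_neg (z : ℂ) :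
    dist (stereoC z) (stereoC (-z)) = 4 * ‖z‖ / (1 + ‖z‖ ^ 2) := by
  rw [dist_stereoC, norm_neg, sqrt_mul_self (by positivity), sub_neg_eq_add, ← two_mul, norm_mul,
    Complex.norm_ofNat]
  ring

theorem le_norm_stereoC_sub_or_le_norm_stereoC_neg_sub {z : ℂ} {s : ℝ}
    (hs : s ≤ 2 * ‖z‖ / (1 + ‖z‖ ^ 2)) (q : E3) :
    s ≤ ‖stereoC z - q‖ ∨ s ≤ ‖stereoC (-z) - q‖ := by
  simp only [← dist_eq_norm]
  refine le_dist_or_le_dist ?_ q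
  calc
    2 * s ≤ 2 * (2 * ‖z‖ / (1 + ‖z‖ ^ 2)) := by gcongr
    _ = 4 * ‖z‖ / (1 + ‖z‖ ^ 2) := by ring
    _ = dist (stereoC z) (stereoC (-z)) := (dist_stereoC_neg z).symm

theorem le_norm_stereoC_sub_or_le_norm_stereoC_add_pi_sub {r s : ℝ} (hr : 0 ≤ r)
    (hs : s ≤ 2 * r / (1 + r ^ 2)) (q : E3) (θ : ℝ) :
    s ≤ ‖stereoC (r * Complex.exp (θ * Complex.I)) - q‖ ∨
      s ≤ ‖stereoC (r * Complex.exp ((θ + π : ℝ) * Complex.I)) - q‖ := by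
  have hnorm : ‖(r : ℂ) * Complex.exp (θ * Complex.I)‖ = r := by
    rw [norm_mul, Complex.norm_exp_ofReal_mul_I, mul_one, Complex.norm_of_nonneg hr]
  rw [Complex.ofReal_add, add_mul, Complex.exp_add_pi_mul_I, mul_neg]
  exact le_norm_stereoC_sub_or_le_norm_stereoC_neg_sub (by rwa [hnorm]) q

theorem statement17_general (q : E3) {r s : ℝ} (hr : 0 ≤ r) (hs : s ≤ 2 * r / (1 + r ^ 2)) :
    π * r ≤ r * (volume {θ : ℝ | θ ∈ Set.Ico 0 (2 * π) ∧
        s ≤ ‖stereoC ((r : ℂ) * Complex.exp (θ * Complex.I)) - q‖}).toReal := by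
  set A := {θ : ℝ | θ ∈ Set.Ico 0 (2 * π) ∧
    s ≤ ‖stereoC ((r : ℂ) * Complex.exp (θ * Complex.I)) - q‖}
  have hA_finite : volume A ≠ ⊤ :=
    measure_ne_top_of_subset (fun _ hθ ↦ hθ.1) measure_Ico_lt_top.ne
  have hA_antipodal : ∀ θ ∈ Set.Ico 0 π, θ ∈ A ∨ θ + π ∈ A := fun θ ⟨hθ₀, hθπ⟩ ↦
    (le_norm_stereoC_sub_or_le_norm_stereoC_add_pi_sub hr hs q θ).imp
      (fun h ↦ ⟨⟨hθ₀, by linarith⟩, h⟩) (fun h ↦ ⟨⟨by linarith, by linarith⟩, h⟩)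
  have hpi_le : volume (Set.Ico 0 π) ≤ volume A :=
    measure_le_of_mem_or_map_mem (measurePreserving_add_right volume π) measurableSet_Ico
      (fun θ hθ hθπ ↦ by linarith [hθ.1, hθπ.2]) hA_antipodal
  rw [volume_Ico, sub_zero, ENNReal.ofReal_le_iff_le_toReal hA_finite] at hpi_le
  rw [mul_comm]
  gcongr

/-- for every `q ∈ ℝ³` and `r ∈ (0,1)`, the set of points `x` on the
circle `|x| = r` with `|π(x) - q| ≥ |x|` has arclength measure at least `πr`, i.e. it
comprises at least half of the circle. -/
theorem statement17 (q : E3) (r : ℝ) (hr : r ∈ Set.Ioo (0 : ℝ) 1) :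
    π * r ≤ r * (volume {θ : ℝ | θ ∈ Set.Ico 0 (2 * π) ∧
        r ≤ ‖stereoC ((r : ℂ) * Complex.exp (θ * Complex.I)) - q‖}).toReal := by
  have hr_le : r ≤ 2 * r / (1 + r ^ 2) := by
    rw [le_div_iff₀ (by positivity)]
    nlinarith [hr.1, hr.2]
  exact statement17_general q hr.1.le hr_le
end
end
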